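/- arXiv:1307.5727 — 2 statements merged into one kernel-verified Lean document; each statement's English description precedes it below -/
import Mathlib

section
/- For all positive integers n and m such that 𝒫(n,m) is nonempty, every graph G ∈ 𝒫(n,m) satisfies |add(G)| ≥ (n+m)(n−m−1)/2; in particular, add(n,m) ≥ (n+m)(n−m−1)/2. -/
/-!
Two vertices in different components of a planar graph always form an addable non-edge, so it is
enough to count the pairs of vertices which are not reachable from one another.

*Planarity.* Suppose `G'` arises from `G` by adding an edge `uv` between different components, and
let `A` be the component of `u`, so that `uv` is the only edge of `G'` leaving `A`. Given a model of
`K₅` or `K₃,₃` in `G'`, 2-connectedness of these graphs shows that the branch sets cannot lie partly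
inside `A` and partly inside `Aᶜ` (`not_both_sides`). Hence all of them meet `A`, or all of them
meet `Aᶜ`, and intersecting them with that side gives a model in `G` (`isMinor_of_meets`).

*Counting.* Choose a root in each component, and let `T` be the number of vertices which are not
roots. Sending a non-root to the first edge of a geodesic towards its root is injective, so `T ≤ m`.
The ordered pairs of distinct vertices in a common component inject into `N × (N ∪ {∗})`, where `N`
is the set of non-roots, so there are at most `m (m + 1)` of them. The remaining
`n (n - 1) - m (m + 1) = (n + m) (n - m - 1)` ordered pairs come from addable non-edges, each
counted twice.
-/

open SimpleGraph Filter Asymptotics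

/-- `H` is a minor of `G`: to each vertex of `H` we can assign a connected nonempty
branch set in `G`, pairwise disjoint, with an edge of `G` between the branch sets of
any two adjacent vertices of `H`. -/
def IsMinor {α β : Type*} (H : SimpleGraph α) (G : SimpleGraph β) : Prop :=
  ∃ f : α → Set β,
    (∀ a, (G.induce (f a)).Connected) ∧
    (∀ a b, a ≠ b → Disjoint (f a) (f b)) ∧
    (∀ a b, H.Adj a b → ∃ u ∈ f a, ∃ v ∈ f b, G.Adj u v)

/-- A graph is planar iff it has neither a `K₅`-minor nor a `K₃,₃`-minor
(Wagner's theorem). -/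
def IsPlanar {V : Type*} (G : SimpleGraph V) : Prop :=
  ¬ IsMinor (completeGraph (Fin 5)) G ∧
    ¬ IsMinor (completeBipartiteGraph (Fin 3) (Fin 3)) G

/-- The number of edges of a graph. -/
noncomputable def edgeCount {V : Type*} (G : SimpleGraph V) : ℕ :=
  G.edgeSet.ncard

/-- The degree of a vertex. -/
noncomputable def vertexDegree {V : Type*} (G : SimpleGraph V) (v : V) : ℕ :=
  (G.neighborSet v).ncard

/-- `𝒫(n,m)`: the set of labelled planar graphs on `{1,…,n}` with exactly `m` edges. -/
def planarSet (n m : ℕ) : Set (SimpleGraph (Fin n)) :=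
  {G | IsPlanar G ∧ edgeCount G = m}

/-- The probability that the uniform random planar graph `P_{n,m}` satisfies `P`. -/
noncomputable def planarProb (n m : ℕ) (P : SimpleGraph (Fin n) → Prop) : ℝ :=
  ({G ∈ planarSet n m | P G}.ncard : ℝ) / ((planarSet n m).ncard : ℝ)

/-- The number of pendant edges (edges incident to a vertex of degree 1). -/
noncomputable def pendantCount {V : Type*} (G : SimpleGraph V) : ℕ :=
  {e ∈ G.edgeSet | ∃ v ∈ e, vertexDegree G v = 1}.ncard

/-- The set of addable non-edges of `G`: non-edges whose addition keeps the graph planar. -/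
def addableSet {V : Type*} (G : SimpleGraph V) : Set (Sym2 V) :=
  {e | ¬ e.IsDiag ∧ e ∉ G.edgeSet ∧ IsPlanar (G ⊔ SimpleGraph.fromEdgeSet {e})}

/-- `add(n,m)`: the minimum number of addable non-edges over all graphs in `𝒫(n,m)`. -/
noncomputable def addMin (n m : ℕ) : ℕ :=
  sInf ((fun G => (addableSet G).ncard) '' planarSet n m)

/-- `W` carries an induced order-preserving copy of `H` in `G`: the increasing bijection
from `{1,…,h}` to `W` is an isomorphism between `H` and the induced subgraph `G[W]`. -/
def IsOrderCopy {h n : ℕ} (H : SimpleGraph (Fin h)) (G : SimpleGraph (Fin n))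
    (W : Finset (Fin n)) : Prop :=
  ∃ hW : W.card = h,
    ∀ i j : Fin h,
      H.Adj i j ↔ G.Adj ((W.orderIsoOfFin hW i : Fin n)) ((W.orderIsoOfFin hW j : Fin n))

/-- `W` is the vertex set of a connected component of `G`. -/
def IsComponent {V : Type*} (G : SimpleGraph V) (W : Finset V) : Prop :=
  (G.induce (W : Set V)).Connected ∧ ∀ v ∈ W, ∀ u, G.Adj v u → u ∈ W

/-- The number of components of `G` admitting an order-preserving isomorphism to `H`. -/
noncomputable def numOrderComponents {h n : ℕ} (H : SimpleGraph (Fin h))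
    (G : SimpleGraph (Fin n)) : ℕ :=
  {W : Finset (Fin n) | IsComponent G W ∧ IsOrderCopy H G W}.ncard

/-- The number of distinct cycles (as subgraphs, identified with their edge sets) of
length at most `k` in `S`. -/
noncomputable def cycleCountLe {V : Type*} (S : SimpleGraph V) (k : ℕ) : ℕ :=
  {E : Set (Sym2 V) | ∃ (v : V) (c : S.Walk v v),
    c.IsCycle ∧ c.length ≤ k ∧ {e | e ∈ c.edges} = E}.ncard

/-! ### Bridges and minors -/

/-- `uv` is the only edge of `G'` leaving `A`, with `u ∈ A` and `v ∉ A`, and every edge of `G'`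
inside `A` or inside the complement of `A` is an edge of `G`. -/
structure BridgeCut {V : Type*} (G G' : SimpleGraph V) (A : Set V) (u v : V) : Prop where
  left_mem : u ∈ A
  right_notMem : v ∉ A
  cross : ∀ x ∈ A, ∀ y ∉ A, G'.Adj x y → x = u ∧ y = v
  inside : ∀ x ∈ A, ∀ y ∈ A, G'.Adj x y → G.Adj x y
  outside : ∀ x ∉ A, ∀ y ∉ A, G'.Adj x y → G.Adj x y

lemma BridgeCut.compl {V : Type*} {G G' : SimpleGraph V} {A : Set V} {u v : V}
    (h : BridgeCut G G' A u v) : BridgeCut G G' Aᶜ v u where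
  left_mem := h.right_notMem
  right_notMem := fun hu => hu h.left_mem
  cross := fun x hx y hy hxy =>
    (h.cross y (not_not.1 hy) x hx hxy.symm).symm
  inside := h.outside
  outside := fun x hx y hy => h.inside x (not_not.1 hx) y (not_not.1 hy)

/-- A connected set of vertices meeting both sides of the cut contains both ends of the bridge. -/
lemma BridgeCut.ends_mem {V : Type*} {G G' : SimpleGraph V} {A : Set V} {u v : V}
    (h : BridgeCut G G' A u v) {s : Set V} (hs : (G'.induce s).Connected)
    {x y : V} (hx : x ∈ s) (hxA : x ∈ A) (hy : y ∈ s) (hyA : y ∉ A) : u ∈ s ∧ v ∈ s := by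
  obtain ⟨p⟩ := hs.preconnected ⟨x, hx⟩ ⟨y, hy⟩
  obtain ⟨d, -, h1, h2⟩ := p.exists_boundary_dart (Subtype.val ⁻¹' A) hxA hyA
  obtain ⟨e1, e2⟩ := h.cross d.fst.1 h1 d.snd.1 h2 d.adj
  exact ⟨e1 ▸ d.fst.2, e2 ▸ d.snd.2⟩

/-- The part of a `G'`-connected set on one side of the cut is `G`-connected: collapsing the other
side to `u` maps walks to walks. -/
lemma BridgeCut.connected_inter {V : Type*} {G G' : SimpleGraph V} {A : Set V} {u v : V}
    (h : BridgeCut G G' A u v) {s : Set V} (hs : (G'.induce s).Connected)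
    (hne : (s ∩ A).Nonempty) : (G.induce (s ∩ A)).Connected := by
  classical
  -- The collapsing point is `u` whenever `s` contains `u`; otherwise it is never reached.
  obtain ⟨w, hw, hwu⟩ : ∃ w ∈ s ∩ A, u ∈ s → w = u := by
    by_cases hu : u ∈ s
    · exact ⟨u, ⟨hu, h.left_mem⟩, fun _ => rfl⟩
    · obtain ⟨w, hw⟩ := hne
      exact ⟨w, hw, fun h => absurd h hu⟩
  let r : s → ↥(s ∩ A) := fun z => if hz : z.1 ∈ A then ⟨z.1, z.2, hz⟩ else ⟨w, hw⟩
  have step : ∀ x y : s, (G'.induce s).Adj x y → (G.induce (s ∩ A)).Reachable (r x) (r y) := by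
    intro x y hxy
    have hxy' : G'.Adj x.1 y.1 := hxy
    by_cases hx : x.1 ∈ A <;> by_cases hy : y.1 ∈ A
    · have : (G.induce (s ∩ A)).Adj (r x) (r y) := by
        simpa [r, hx, hy] using h.inside _ hx _ hy hxy'
      exact this.reachable
    · have e := (h.cross _ hx _ hy hxy').1
      have : r x = r y := by
        apply Subtype.ext
        simp only [r, hx, hy, dite_true, dite_false]
        rw [hwu (e ▸ x.2), e]
      rw [this]
    · have e := (h.cross _ hy _ hx hxy'.symm).1
      have : r x = r y := by
        apply Subtype.ext
        simp only [r, hx, hy, dite_true, dite_false]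
        rw [hwu (e ▸ y.2), e]
      rw [this]
    · have : r x = r y := by simp [r, hx, hy]
      rw [this]
  have walk : ∀ x y : s, (G'.induce s).Walk x y →
      (G.induce (s ∩ A)).Reachable (r x) (r y) := by
    intro x y p
    induction p with
    | nil => exact Reachable.refl _
    | cons hadj _ ih => exact (step _ _ hadj).trans ih
  have : Nonempty ↥(s ∩ A) := hne.to_subtype
  refine ⟨fun x y => ?_⟩
  obtain ⟨p⟩ := hs.preconnected ⟨x.1, x.2.1⟩ ⟨y.1, y.2.1⟩
  have := walk _ _ p
  simpa [r, x.2.2, y.2.2] using this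

/-- If every branch set of a model in `G'` meets `A`, intersecting with `A` gives a model in `G`. -/
lemma BridgeCut.isMinor_of_meets {α V : Type*} {H : SimpleGraph α} {G G' : SimpleGraph V}
    {A : Set V} {u v : V} (h : BridgeCut G G' A u v) (f : α → Set V)
    (hc : ∀ a, (G'.induce (f a)).Connected)
    (hd : ∀ a b, a ≠ b → Disjoint (f a) (f b))
    (he : ∀ a b, H.Adj a b → ∃ x ∈ f a, ∃ y ∈ f b, G'.Adj x y)
    (hA : ∀ a, (f a ∩ A).Nonempty) : IsMinor H G := by
  have hu : ∀ a, ∀ x ∈ f a, x ∉ A → u ∈ f a := fun a x hx hxA => by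
    obtain ⟨z, hz, hzA⟩ := hA a
    exact (h.ends_mem (hc a) hz hzA hx hxA).1
  refine ⟨fun a => f a ∩ A, fun a => h.connected_inter (hc a) (hA a), fun a b hab =>
    (hd a b hab).mono Set.inter_subset_left Set.inter_subset_left, fun a b hab => ?_⟩
  obtain ⟨x, hx, y, hy, hxy⟩ := he a b hab
  have hdis := Set.disjoint_left.1 (hd a b hab.ne)
  by_cases hxA : x ∈ A <;> by_cases hyA : y ∈ A
  · exact ⟨x, ⟨hx, hxA⟩, y, ⟨hy, hyA⟩, h.inside x hxA y hyA hxy⟩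
  · have e := (h.cross x hxA y hyA hxy).1
    exact absurd (hu b y hy hyA) (hdis (e ▸ hx))
  · have e := (h.cross y hyA x hxA hxy.symm).1
    exact absurd (e ▸ hy) (hdis (hu a x hx hxA))
  · exact absurd (hu b y hy hyA) (hdis (hu a x hx hxA))

/-- A strong form of 2-connectedness, shared by `K₅` and `K₃,₃`: there are at least three vertices,
and after deleting any vertex the others are pairwise at distance at most two. -/
structure ShortlyTwoConnected {α : Type*} (H : SimpleGraph α) : Prop where
  third : ∀ a b : α, ∃ c, c ≠ a ∧ c ≠ b
  path : ∀ a b p : α, a ≠ b → p ≠ a → p ≠ b → H.Adj a b ∨ ∃ c, c ≠ p ∧ H.Adj a c ∧ H.Adj c b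

/-- If the branch set of `a` lies in `A` and avoids `u`, then no branch set lies in the complement
of `A`: a path in `H` avoiding the branch set containing `u` cannot leave `A`. -/
lemma BridgeCut.not_both_sides_aux {α V : Type*} {H : SimpleGraph α} (hH : ShortlyTwoConnected H)
    {G G' : SimpleGraph V} {A : Set V} {u v : V} (h : BridgeCut G G' A u v) (f : α → Set V)
    (hc : ∀ a, (G'.induce (f a)).Connected)
    (hd : ∀ a b, a ≠ b → Disjoint (f a) (f b))
    (he : ∀ a b, H.Adj a b → ∃ x ∈ f a, ∃ y ∈ f b, G'.Adj x y)
    {a b : α} (ha : f a ⊆ A) (hb : f b ⊆ Aᶜ) (hua : u ∉ f a) : False := by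
  have step : ∀ x y, H.Adj x y → f x ⊆ A → u ∉ f x → u ∉ f y → f y ⊆ A := by
    intro x y hxy hx hux huy z hz
    by_contra hzA
    obtain ⟨s, hs, t, ht, hst⟩ := he x y hxy
    by_cases htA : t ∈ A
    · exact huy (h.ends_mem (hc y) ht htA hz hzA).1
    · exact hux ((h.cross s (hx hs) t htA hst).1 ▸ hs)
  have hub : u ∉ f b := fun hu => hb hu h.left_mem
  have hnb : ¬ f b ⊆ A := fun hbA => by
    obtain ⟨z⟩ := (hc b).nonempty
    exact hb z.2 (hbA z.2)
  have hab : a ≠ b := fun e => hnb (e ▸ ha)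
  -- `p` is the vertex whose branch set contains `u`, or a third vertex if there is none.
  obtain ⟨p, hpa, hpb, hp⟩ : ∃ p, p ≠ a ∧ p ≠ b ∧ ∀ c, c ≠ p → u ∉ f c := by
    by_cases hex : ∃ p, u ∈ f p
    · obtain ⟨p, hp⟩ := hex
      exact ⟨p, fun e => hua (e ▸ hp), fun e => hub (e ▸ hp),
        fun c hcp => Set.disjoint_left.1 (hd p c hcp.symm) hp⟩
    · obtain ⟨p, h1, h2⟩ := hH.third a b
      exact ⟨p, h1, h2, fun c _ hu => hex ⟨c, hu⟩⟩
  rcases hH.path a b p hab hpa hpb with hadj | ⟨c, hcp, hac, hcb⟩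
  · exact hnb (step a b hadj ha hua hub)
  · exact hnb (step c b hcb (step a c hac ha hua (hp c hcp)) (hp c hcp) hub)

lemma BridgeCut.not_both_sides {α V : Type*} {H : SimpleGraph α} (hH : ShortlyTwoConnected H)
    {G G' : SimpleGraph V} {A : Set V} {u v : V} (h : BridgeCut G G' A u v) (f : α → Set V)
    (hc : ∀ a, (G'.induce (f a)).Connected)
    (hd : ∀ a b, a ≠ b → Disjoint (f a) (f b))
    (he : ∀ a b, H.Adj a b → ∃ x ∈ f a, ∃ y ∈ f b, G'.Adj x y)
    {a b : α} (ha : f a ⊆ A) (hb : f b ⊆ Aᶜ) : False := by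
  have L := fun {a b : α} => h.not_both_sides_aux hH f hc hd he (a := a) (b := b)
  have R := fun {a b : α} => h.compl.not_both_sides_aux hH f hc hd he (a := a) (b := b)
  rw [← compl_compl A] at ha
  by_cases hua : u ∈ f a
  swap
  · exact L (by simpa using ha) hb hua
  by_cases hvb : v ∈ f b
  swap
  · exact R hb ha hvb
  -- Both ends of the bridge are used up, so a third branch set lies on one side and avoids them.
  obtain ⟨c, hca, hcb⟩ := hH.third a b
  have huc := Set.disjoint_left.1 (hd a c hca.symm) hua
  have hvc := Set.disjoint_left.1 (hd b c hcb.symm) hvb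
  by_cases hcA : f c ⊆ A
  · exact L hcA hb huc
  · refine R (a := c) (b := a) (fun z hz hzA => hcA fun y hy => ?_) ha hvc
    by_contra hyA
    exact huc (h.ends_mem (hc c) hz hzA hy hyA).1

lemma BridgeCut.isMinor {α V : Type*} {H : SimpleGraph α} (hH : ShortlyTwoConnected H)
    {G G' : SimpleGraph V} {A : Set V} {u v : V} (h : BridgeCut G G' A u v)
    (hm : IsMinor H G') : IsMinor H G := by
  obtain ⟨f, hc, hd, he⟩ := hm
  by_cases hA : ∀ a, (f a ∩ A).Nonempty
  · exact h.isMinor_of_meets f hc hd he hA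
  · push Not at hA
    obtain ⟨b, hb⟩ := hA
    refine h.compl.isMinor_of_meets f hc hd he fun a => ?_
    by_contra ha
    refine h.not_both_sides hH f hc hd he (a := a) (b := b) (fun z hz => ?_) (fun z hz hzA => ?_)
    · by_contra hzA
      exact ha ⟨z, hz, hzA⟩
    · exact Set.eq_empty_iff_forall_notMem.1 hb z ⟨hz, hzA⟩

lemma shortlyTwoConnected_K5 : ShortlyTwoConnected (completeGraph (Fin 5)) where
  third := by decide
  path := fun a b _ hab _ _ => Or.inl (by simpa using hab)

lemma shortlyTwoConnected_K33 :
    ShortlyTwoConnected (completeBipartiteGraph (Fin 3) (Fin 3)) where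
  third := by decide
  path := by
    have key : ∀ p : Fin 3, ∃ c, c ≠ p := by decide
    rintro (a | a) (b | b) (p | p) _ _ _ <;>
      simp [key]

/-- Joining two components of a planar graph by an edge keeps it planar. -/
lemma isPlanar_add_of_not_reachable {V : Type*} {G : SimpleGraph V} (hG : IsPlanar G) {u v : V}
    (huv : ¬ G.Reachable u v) : IsPlanar (G ⊔ SimpleGraph.fromEdgeSet {s(u, v)}) := by
  have adj : ∀ x y, (G ⊔ SimpleGraph.fromEdgeSet {s(u, v)}).Adj x y →
      G.Adj x y ∨ (x = u ∧ y = v) ∨ (x = v ∧ y = u) := by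
    intro x y hxy
    simp only [SimpleGraph.sup_adj, SimpleGraph.fromEdgeSet_adj, Set.mem_singleton_iff,
      Sym2.eq_iff] at hxy
    tauto
  have cut : BridgeCut G (G ⊔ SimpleGraph.fromEdgeSet {s(u, v)}) {x | G.Reachable u x} u v :=
    { left_mem := Reachable.refl u
      right_notMem := huv
      cross := fun x hx y hy hxy => by
        rcases adj x y hxy with h | h | h
        · exact absurd (Reachable.trans hx h.reachable) hy
        · exact h
        · exact absurd (h.1 ▸ hx) huv
      inside := fun x hx y hy hxy => by
        rcases adj x y hxy with h | h | h
        · exact h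
        · exact absurd (h.2 ▸ hy) huv
        · exact absurd (h.1 ▸ hx) huv
      outside := fun x hx y hy hxy => by
        rcases adj x y hxy with h | h | h
        · exact h
        · exact absurd (h.1 ▸ Reachable.refl u) hx
        · exact absurd (h.2 ▸ Reachable.refl u) hy }
  exact ⟨fun h => hG.1 (cut.isMinor shortlyTwoConnected_K5 h),
    fun h => hG.2 (cut.isMinor shortlyTwoConnected_K33 h)⟩

/-! ### Counting reachable pairs -/

/-- The chosen root of the component of `v`. -/
noncomputable def componentRoot {V : Type*} (G : SimpleGraph V) (v : V) : V :=
  (G.connectedComponentMk v).out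

lemma reachable_componentRoot {V : Type*} (G : SimpleGraph V) (v : V) :
    G.Reachable v (componentRoot G v) :=
  (ConnectedComponent.exact (Quot.out_eq (G.connectedComponentMk v))).symm

lemma componentRoot_eq {V : Type*} (G : SimpleGraph V) {v w : V} (h : G.Reachable v w) :
    componentRoot G v = componentRoot G w := by
  unfold componentRoot
  rw [ConnectedComponent.sound h]

/-- There are at most as many non-roots as edges: a non-root is sent to the first edge of a geodesic
towards its root. -/
lemma card_nonroots_le {V : Type*} [Fintype V] [DecidableEq V] (G : SimpleGraph V) :
    (Finset.univ.filter fun v => componentRoot G v ≠ v).card ≤ edgeCount G := by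
  classical
  have next : ∀ v, componentRoot G v ≠ v → ∃ w, G.Adj v w ∧
      G.dist w (componentRoot G w) < G.dist v (componentRoot G v) := by
    intro v hv
    obtain ⟨p, hp⟩ := (reachable_componentRoot G v).exists_walk_length_eq_dist
    generalize hr : componentRoot G v = r at p hp hv
    cases p with
    | nil => exact absurd rfl hv
    | cons hadj q =>
      refine ⟨_, hadj, ?_⟩
      rw [← componentRoot_eq G hadj.reachable, hr, ← hp, Walk.length_cons]
      exact Nat.lt_succ_of_le (dist_le q)
  choose! g hg1 hg2 using next
  rw [edgeCount, Set.ncard_eq_toFinset_card']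
  refine Finset.card_le_card_of_injOn (fun v => s(v, g v)) (fun v hv => ?_) ?_
  · simp only [Finset.coe_filter, Finset.mem_univ, true_and, Set.mem_ofPred_eq] at hv
    simpa using hg1 v hv
  · intro v hv w hw hvw
    simp only [Finset.coe_filter, Finset.mem_univ, true_and, Set.mem_ofPred_eq] at hv hw
    rcases Sym2.eq_iff.1 hvw with h | ⟨h1, h2⟩
    · exact h.1
    · have a := hg2 v hv
      have b := hg2 w hw
      rw [h2] at a
      rw [← h1] at b
      omega

/-- At most `m (m + 1)` ordered pairs of distinct vertices lie in a common component. With `r` the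
common root, the pairs `(v, r)`, `(r, w)` and `(v, w)` are encoded as `(v, ∗)`, `(w, w)` and
`(v, w)` respectively. -/
lemma card_reachable_pairs_le {V : Type*} [Fintype V] [DecidableEq V] (G : SimpleGraph V)
    [DecidableRel G.Reachable] :
    (Finset.univ.filter fun p : V × V => p.1 ≠ p.2 ∧ G.Reachable p.1 p.2).card ≤
      edgeCount G * (edgeCount G + 1) := by
  set N := Finset.univ.filter fun v => componentRoot G v ≠ v with hN
  have hle : (Finset.univ.filter fun p : V × V => p.1 ≠ p.2 ∧ G.Reachable p.1 p.2).card ≤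
      (N ×ˢ N.insertNone).card := by
    refine Finset.card_le_card_of_injOn (fun p =>
      if componentRoot G p.1 = p.1 then (p.2, some p.2)
      else if componentRoot G p.2 = p.2 then (p.1, none) else (p.1, some p.2)) ?_ ?_
    · rintro ⟨v, w⟩ h
      simp only [Finset.coe_filter, Finset.mem_univ, true_and, Set.mem_ofPred_eq] at h
      have := componentRoot_eq G h.2
      simp only [Finset.mem_coe]
      split_ifs with h1 h2
      · have : componentRoot G w ≠ w := by grind
        simp [hN, this]
      · simp [hN, h1]
      · simp [hN, h1, h2]
    · rintro ⟨v, w⟩ h ⟨v', w'⟩ h' heq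
      simp only [Finset.coe_filter, Finset.mem_univ, true_and, Set.mem_ofPred_eq] at h h'
      have e1 := componentRoot_eq G h.2
      have e2 := componentRoot_eq G h'.2
      have h1 := h.1
      have h2 := h'.1
      simp only at heq
      clear h h'
      split_ifs at heq <;> simp only [Prod.mk.injEq, Option.some.injEq, reduceCtorEq,
        and_false, and_true] at heq <;> grind
  refine hle.trans ?_
  rw [Finset.card_product, Finset.card_insertNone]
  have := card_nonroots_le G
  exact Nat.mul_le_mul this (Nat.add_le_add_right this 1)

/-- Every pair in different components is addable, and each addable non-edge accounts for at most
two ordered pairs. -/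
lemma card_unreachable_pairs_le {V : Type*} [Fintype V] [DecidableEq V] {G : SimpleGraph V}
    (hG : IsPlanar G) [DecidableRel G.Reachable] :
    (Finset.univ.filter fun p : V × V => ¬ G.Reachable p.1 p.2).card ≤
      2 * (addableSet G).ncard := by
  classical
  rw [Set.ncard_eq_toFinset_card' (addableSet G)]
  refine Finset.card_le_mul_card_image_of_maps_to (f := fun p : V × V => s(p.1, p.2)) ?_ 2 ?_
  · rintro ⟨v, w⟩ h
    simp only [Finset.mem_filter, Finset.mem_univ, true_and] at h
    rw [Set.mem_toFinset]
    refine ⟨?_, ?_, isPlanar_add_of_not_reachable hG h⟩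
    · rw [Sym2.mk_isDiag_iff]
      intro (hvw : v = w)
      exact h (hvw ▸ Reachable.refl v)
    · intro he
      exact h (Adj.reachable he)
  · intro e _
    induction e with
    | _ a b =>
      refine (Finset.card_le_card (t := {(a, b), (b, a)}) ?_).trans Finset.card_le_two
      rintro ⟨x, y⟩ h
      simp only [Finset.mem_filter, Sym2.eq_iff] at h
      simpa using h.2

lemma addable_bound {n m : ℕ} {G : SimpleGraph (Fin n)} (hG : G ∈ planarSet n m) :
    ((n : ℝ) + m) * ((n : ℝ) - m - 1) / 2 ≤ ((addableSet G).ncard : ℝ) := by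
  classical
  obtain ⟨hp, hm⟩ := hG
  have h1 := card_reachable_pairs_le G
  have h2 := card_unreachable_pairs_le hp
  rw [hm] at h1
  have h3 : n * n ≤ (Finset.univ.filter fun p : Fin n × Fin n => p.1 = p.2).card +
      ((Finset.univ.filter fun p : Fin n × Fin n => p.1 ≠ p.2 ∧ G.Reachable p.1 p.2).card +
      (Finset.univ.filter fun p : Fin n × Fin n => ¬ G.Reachable p.1 p.2).card) := by
    have : n * n = (Finset.univ : Finset (Fin n × Fin n)).card := by simp
    rw [this]
    refine le_trans (Finset.card_le_card ?_) ((Finset.card_union_le _ _).trans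
      (Nat.add_le_add_left (Finset.card_union_le _ _) _))
    intro p _
    simp only [Finset.mem_union, Finset.mem_filter, Finset.mem_univ, true_and]
    tauto
  have h4 : (Finset.univ.filter fun p : Fin n × Fin n => p.1 = p.2).card ≤ n := by
    have := Finset.card_le_card_of_injOn (s := Finset.univ.filter fun p : Fin n × Fin n => p.1 = p.2)
      (t := (Finset.univ : Finset (Fin n))) Prod.fst (fun _ _ => Finset.mem_coe.2 (Finset.mem_univ _))
      (by
        rintro ⟨a, b⟩ h ⟨c, d⟩ h' e
        simp only [Finset.coe_filter, Finset.mem_univ, true_and, Set.mem_ofPred_eq] at h h' e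
        subst h h' e
        rfl)
    simpa using this
  have h5 : n * n ≤ n + (m * (m + 1) + 2 * (addableSet G).ncard) := by omega
  have h6 : (n : ℝ) * n ≤ n + (m * (m + 1) + 2 * (addableSet G).ncard) := by exact_mod_cast h5
  linarith

theorem addable_lower_bound (n m : ℕ) (hn : 0 < n) (hm : 0 < m)
    (hne : (planarSet n m).Nonempty) :
    (∀ G ∈ planarSet n m,
        ((n : ℝ) + m) * ((n : ℝ) - m - 1) / 2 ≤ ((addableSet G).ncard : ℝ)) ∧
      ((n : ℝ) + m) * ((n : ℝ) - m - 1) / 2 ≤ (addMin n m : ℝ) := by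
  refine ⟨fun G hG => addable_bound hG, ?_⟩
  obtain ⟨G, hG, hGe⟩ := Nat.sInf_mem (hne.image fun G => (addableSet G).ncard)
  have : addMin n m = (addableSet G).ncard := hGe.symm
  rw [this]
  exact addable_bound hG
end

section
/- Let H be a fixed tree with vertex set {1,…,|H|}, let c>0 be a fixed constant, and let m:ℕ→ℕ satisfy cn ≤ m(n) ≤ (1+o(1))n as n→∞. Then there exists a constant λ>0 (depending on H and c) such that, for all sufficiently large n, the probability that P_{n,m(n)} has fewer than ⌈λ·add(n,m(n))/n⌉ components admitting an order-preserving isomorphism to H is less than e^{−⌈λ·add(n,m(n))/n⌉}. -/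
/-!
Few components of shape `H` can be traded for more at a controlled rate. Let `a s` be the number of
planar graphs with `m` edges on `n` vertices having at most `s` components that are
order-preserving copies of `H`, and let `h` be the order of `H`. The heart of the proof is the
inequality `a s * add(n,m) ≤ a (s + C) * (s + C) * K * n` with constants `C = 6 h + 2` and `K`
(`markedGraphs_round`). It comes from double counting the following construction.

* Add an addable edge: at least `add(n,m)` choices, and the new edge is one of `m + 1` edges
  (`markedGraphs_add`).
* `h` times, isolate and mark a vertex at the price of one edge (`markedGraphs_isolate`). Since
  `m ≤ (1 + o(1)) n`, linearly many vertices have degree at most two. If many of them are isolated,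
  one is marked and any edge is deleted; a leaf loses its edge; a vertex of degree two with
  nonadjacent neighbours is suppressed; a vertex of degree two with adjacent neighbours is cut off
  and one addable edge is inserted elsewhere. In each case the number of choices matches, up to a
  constant, the number of ways of undoing the step.
* Place a copy of `H` on the `h` marked vertices, which uses `h - 1` edges and restores `m`
  (`markedGraphs_plant`). To undo this it suffices to know which of the at most `s + C` copies of
  `H` was planted.

Each step changes edges at boundedly many vertices, hence creates boundedly many new copies of `H`
(`numOrderComponents_le`). With `T = ⌈λ add(n,m) / n⌉` and `λ` small, the inequality says
`3 * a s ≤ a (s + C)` for all relevant `s`, provided that `add(n,m) / n` is large; applying it `T`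
times from `s = T - 1` bounds the probability by `3 ^ (-T) < e ^ (-T)`.

That `add(n,m) / n` tends to infinity, which also supplies the addable edges for the last kind of
isolation, is `many_addable`. After hanging trees are stripped, a planar graph with at most
`(1 + ε) n` edges falls into few vertices of degree at least three and few paths and cycles between
them, apart from whole components. Two vertices hanging from the same path or cycle, or from
different components, can be joined.

Planarity is the exclusion of `K₅` and `K₃,₃` as minors. All planarity facts needed follow from
three closure properties: adding a bridge between components (`planar_bridge`), adding a vertex
adjacent to at most the two ends of an edge (`planar_triangle`), and suppressing a vertex
(`planar_contract`). They use only that the excluded graphs have minimum degree at least three and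
stay connected when a vertex is deleted (`GoodMinor`).
-/

open SimpleGraph Filter Asymptotics

/-! ### Minors and planarity -/

/-- The features of `K₅` and `K₃,₃` used below: every vertex has three distinct neighbours, and
deleting any vertex leaves a connected graph (phrased through two-colourings that are constant on
edges avoiding `p`). -/
structure GoodMinor {κ : Type*} (K : SimpleGraph κ) : Prop where
  deg : ∀ a, ∃ b₁ b₂ b₃, b₁ ≠ b₂ ∧ b₁ ≠ b₃ ∧ b₂ ≠ b₃ ∧ K.Adj a b₁ ∧ K.Adj a b₂ ∧ K.Adj a b₃
  conn : ∀ (p : κ) (S : κ → Prop),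
    (∀ b b', b ≠ p → b' ≠ p → K.Adj b b' → S b → S b') → ∀ b b', b ≠ p → b' ≠ p → S b → S b'

lemma good_K5 : GoodMinor (completeGraph (Fin 5)) where
  deg := by
    intro a
    simp only [completeGraph, top_adj]
    revert a; decide
  conn := by
    intro p S h b b' hb hb' hS
    by_cases e : b = b'
    · exact e ▸ hS
    · exact h b b' hb hb' e hS

lemma good_K33 : GoodMinor (completeBipartiteGraph (Fin 3) (Fin 3)) where
  deg := by
    rintro (a | a)
    · exact ⟨.inr 0, .inr 1, .inr 2, by decide, by decide, by decide, by simp, by simp, by simp⟩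
    · exact ⟨.inl 0, .inl 1, .inl 2, by decide, by decide, by decide, by simp, by simp, by simp⟩
  conn := by
    intro p S h b b' hb hb' hS
    have ex : ∀ p : Fin 3 ⊕ Fin 3, ∃ x y : Fin 3, Sum.inl x ≠ p ∧ Sum.inr y ≠ p := by decide
    obtain ⟨x, y, hx, hy⟩ := ex p
    rcases b with b | b <;> rcases b' with b' | b'
    · exact h (.inr y) _ hy hb' (by simp) (h _ (.inr y) hb hy (by simp) hS)
    · exact h _ _ hb hb' (by simp) hS
    · exact h _ _ hb hb' (by simp) hS
    · exact h (.inl x) _ hx hb' (by simp) (h _ (.inl x) hb hx (by simp) hS)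

/-- Connectedness is carried over by a map that respects reachability and meets every component of
the target. -/
lemma conn_tool {α β : Type*} {A : SimpleGraph α} {B : SimpleGraph β} (hA : A.Connected)
    (φ : α → β) (h1 : ∀ x y, A.Adj x y → B.Reachable (φ x) (φ y))
    (h2 : ∀ b, ∃ a, B.Reachable b (φ a)) : B.Connected := by
  have key : ∀ x y, A.Reachable x y → B.Reachable (φ x) (φ y) := by
    intro x y ⟨p⟩
    induction p with
    | nil => exact Reachable.refl _
    | cons h _ ih => exact (h1 _ _ h).trans ih
  have := hA.nonempty
  refine (connected_iff _).2 ⟨fun b b' => ?_, ⟨φ (Classical.arbitrary α)⟩⟩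
  obtain ⟨a, ha⟩ := h2 b
  obtain ⟨a', hab⟩ := h2 b'
  exact ha.trans ((key a a' (hA.preconnected a a')).trans hab.symm)

/-- In a connected graph, a nonempty set of vertices closed under adjacency is everything. -/
lemma conn_closed {α : Type*} {A : SimpleGraph α} (hA : A.Connected) (S : α → Prop)
    (hS : ∀ x y, A.Adj x y → S x → S y) {x : α} (hx : S x) (y : α) : S y := by
  obtain ⟨p⟩ := hA.preconnected x y
  induction p with
  | nil => exact hx
  | cons h _ ih => exact ih (hS _ _ h hx)

section Minors
variable {V κ : Type*} {K : SimpleGraph κ} {R R' : SimpleGraph V}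

lemma minor_mono (h : R' ≤ R) : IsMinor K R' → IsMinor K R := by
  rintro ⟨f, h1, h2, h3⟩
  refine ⟨f, fun a => conn_tool (h1 a) id (fun x y hxy => ?_) (fun b => ⟨b, Reachable.refl _⟩), h2,
    fun a b hab => ?_⟩
  · exact Adj.reachable (h hxy)
  · obtain ⟨u, hu, v, hv, huv⟩ := h3 a b hab
    exact ⟨u, hu, v, hv, h huv⟩

/-- A new edge `xy` joining a union `C` of components of `R` to its complement creates no
`K`-minor: all branch sets but the one containing `x` lie on one side, and intersecting with that
side gives a model in `R`. -/
lemma minor_bridge (hK : GoodMinor K) (C : Set V) (hC : ∀ a b, R.Adj a b → (a ∈ C ↔ b ∈ C))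
    {x y : V} (hx : x ∈ C) (hy : y ∉ C)
    (hR : ∀ a b, R'.Adj a b → R.Adj a b ∨ (a = x ∧ b = y) ∨ (a = y ∧ b = x)) :
    IsMinor K R' → IsMinor K R := by
  rintro ⟨f, h1, h2, h3⟩
  classical
  have hdis : ∀ a b z, z ∈ f a → z ∈ f b → a = b := by
    intro a b z ha hb
    by_contra hne
    exact Set.disjoint_left.1 (h2 a b hne) ha hb
  have : Nonempty κ ∨ IsEmpty κ := (isEmpty_or_nonempty κ).symm
  rcases this with hκ | hκ
  swap
  · exact ⟨fun _ => Set.univ, fun a => hκ.elim a, fun a => hκ.elim a, fun a => hκ.elim a⟩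
  -- `p` is the index of the branch set containing `x`, if there is one
  obtain ⟨p, hp⟩ : ∃ p, ∀ b, b ≠ p → x ∉ f b := by
    by_cases hxf : ∃ p, x ∈ f p
    · obtain ⟨p, hp⟩ := hxf
      exact ⟨p, fun b hb hxb => hb (hdis _ _ _ hxb hp)⟩
    · push Not at hxf
      exact ⟨Classical.arbitrary κ, fun b _ => hxf b⟩
  have adjR : ∀ a b, a ≠ x → b ≠ x → R'.Adj a b → R.Adj a b := by
    intro a b ha hb hab
    rcases hR a b hab with h | ⟨h, _⟩ | ⟨_, h⟩
    · exact h
    · exact absurd h ha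
    · exact absurd h hb
  have sideb : ∀ b, b ≠ p → ∀ D : Set V, (∀ a b, R.Adj a b → a ∈ D → b ∈ D) →
      ∀ z ∈ f b, z ∈ D → f b ⊆ D := by
    intro b hb D hD z hz hzD t ht
    refine conn_closed (h1 b) (fun q => (q : V) ∈ D) ?_ (x := ⟨z, hz⟩) hzD ⟨t, ht⟩
    rintro ⟨s, hs⟩ ⟨t, ht⟩ hst hsD
    refine hD s t (adjR s t ?_ ?_ hst) hsD
    · rintro rfl; exact hp b hb hs
    · rintro rfl; exact hp b hb ht
  have ne : ∀ a, (f a).Nonempty := fun a => by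
    obtain ⟨z⟩ := (h1 a).nonempty
    exact ⟨z, z.2⟩
  have sideall : ∀ D : Set V, (∀ a b, R.Adj a b → a ∈ D → b ∈ D) →
      ∀ b b', b ≠ p → b' ≠ p → f b ⊆ D → f b' ⊆ D := by
    intro D hD
    apply hK.conn p
    intro b b' hb hb' hbb' hbD
    obtain ⟨u, hu, v, hv, huv⟩ := h3 b b' hbb'
    refine sideb b' hb' D hD v hv (hD u v (adjR u v ?_ ?_ huv) (hbD hu))
    · rintro rfl; exact hp b hb hu
    · rintro rfl; exact hp b' hb' hv
  obtain ⟨b₁, b₂, -, hb12, -, -, hpb₁, hpb₂, -⟩ := hK.deg p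
  -- the common side `D`, together with the endpoint `r` of the new edge in it
  obtain ⟨D, r, r', hD, hrr', hrD, hr'D, hb₁D, hR⟩ : ∃ (D : Set V) (r r' : V),
      (∀ a b, R.Adj a b → (a ∈ D ↔ b ∈ D)) ∧ (r = x ∧ r' = y ∨ r = y ∧ r' = x) ∧ r ∈ D ∧ r' ∉ D ∧
        f b₁ ⊆ D ∧ ∀ a b, R'.Adj a b → R.Adj a b ∨ (a = r ∧ b = r') ∨ (a = r' ∧ b = r) := by
    obtain ⟨z, hz⟩ := ne b₁
    by_cases hzC : z ∈ C
    · exact ⟨C, x, y, hC, .inl ⟨rfl, rfl⟩, hx, hy,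
        sideb b₁ hpb₁.ne' C (fun a b h => (hC a b h).1) z hz hzC, hR⟩
    · have hC' : ∀ a b, R.Adj a b → (a ∈ Cᶜ ↔ b ∈ Cᶜ) := fun a b h => not_congr (hC a b h)
      exact ⟨Cᶜ, y, x, hC', .inr ⟨rfl, rfl⟩, hy, fun h => h hx,
        sideb b₁ hpb₁.ne' Cᶜ (fun a b h => (hC' a b h).1) z hz hzC, fun a b h => by
          rcases hR a b h with h | h | h
          · exact .inl h
          · exact .inr (.inr h)
          · exact .inr (.inl h)⟩
  have allD : ∀ b, b ≠ p → f b ⊆ D := fun b hb =>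
    sideall D (fun a b h => (hD a b h).1) b₁ b hpb₁.ne.symm hb hb₁D
  -- edges between `f p` and other branch sets are edges of `R` inside `D`
  have pedge : ∀ b, K.Adj p b → ∀ s ∈ f p, ∀ t ∈ f b, R'.Adj s t → R.Adj s t := by
    intro b hpb s hs t ht hst
    rcases hR s t hst with h | ⟨rfl, rfl⟩ | ⟨rfl, rfl⟩
    · exact h
    · exact absurd (allD b hpb.ne' ht) hr'D
    exfalso
    have htp : t ∉ f p := fun h => hpb.ne (hdis _ _ _ h ht)
    have hall : ∀ z ∈ f p, z ∉ D := by
      intro z hz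
      refine conn_closed (h1 p) (fun q => (q : V) ∉ D) ?_ (x := ⟨s, hs⟩) hr'D ⟨z, hz⟩
      rintro ⟨a, ha⟩ ⟨b, hb⟩ hab haD hbD
      rcases hR a b hab with h | ⟨rfl, _⟩ | ⟨_, rfl⟩
      · exact haD ((hD _ _ h).2 hbD)
      · exact htp ha
      · exact htp hb
    obtain ⟨b', hbb', hpb'⟩ : ∃ b', b' ≠ b ∧ K.Adj p b' := by
      by_cases e : b₁ = b
      · exact ⟨b₂, fun h => hb12 (e.trans h.symm), hpb₂⟩
      · exact ⟨b₁, e, hpb₁⟩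
    obtain ⟨u, hu, v, hv, huv⟩ := h3 p b' hpb'
    rcases hR u v huv with h | ⟨rfl, _⟩ | ⟨_, rfl⟩
    · exact hall u hu ((hD _ _ h).2 (allD b' hpb'.ne' hv))
    · exact htp hu
    · exact hbb' (hdis _ _ _ hv ht)
  refine ⟨fun a => f a ∩ D, fun a => ?_, fun a b hab =>
    (h2 a b hab).mono Set.inter_subset_left Set.inter_subset_left, ?_⟩
  · obtain ⟨z, hza, hzD⟩ : ∃ z ∈ f a, z ∈ D := by
      by_cases hap : a = p
      · subst hap
        obtain ⟨u, hu, v, hv, huv⟩ := h3 a b₁ hpb₁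
        exact ⟨u, hu, (hD _ _ (pedge b₁ hpb₁ u hu v hv huv)).2 (hb₁D hv)⟩
      · obtain ⟨z, hz⟩ := ne a
        exact ⟨z, hz, allD a hap hz⟩
    -- retract the part outside `D` to `r` (or anywhere, if `r` is not in this branch set)
    let r₀ : V := if r ∈ f a then r else z
    have hr₀ : r₀ ∈ f a ∩ D := by
      by_cases h : r ∈ f a
      · simp only [r₀, h, if_true]; exact ⟨h, hrD⟩
      · simp only [r₀, h, if_false]; exact ⟨hza, hzD⟩
    refine conn_tool (h1 a) (fun q => if h : (q : V) ∈ D then ⟨q, q.2, h⟩ else ⟨r₀, hr₀⟩) ?_ ?_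
    · rintro ⟨s, hs⟩ ⟨t, ht⟩ hst
      have hst : R'.Adj s t := hst
      by_cases hsD : s ∈ D <;> by_cases htD : t ∈ D
      · simp only [hsD, htD, dif_pos]
        apply Adj.reachable
        rcases hR s t hst with h | ⟨_, rfl⟩ | ⟨rfl, _⟩
        · exact h
        · exact absurd htD hr'D
        · exact absurd hsD hr'D
      · simp only [hsD, htD, dif_pos, dif_neg, not_false_eq_true]
        rcases hR s t hst with h | ⟨rfl, rfl⟩ | ⟨rfl, rfl⟩
        · exact absurd ((hD _ _ h).1 hsD) htD
        · simp [r₀, hs]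
        · exact absurd hsD hr'D
      · simp only [hsD, htD, dif_pos, dif_neg, not_false_eq_true]
        rcases hR s t hst with h | ⟨rfl, rfl⟩ | ⟨rfl, rfl⟩
        · exact absurd ((hD _ _ h).2 htD) hsD
        · exact absurd hrD hsD
        · simp [r₀, ht]
      · simp [hsD, htD]
    · rintro ⟨b, hb, hbD⟩
      exact ⟨⟨b, hb⟩, by simp [hbD]⟩
  · intro a b hab
    obtain ⟨u, hu, v, hv, huv⟩ := h3 a b hab
    by_cases hap : a = p
    · subst hap
      have := pedge b hab u hu v hv huv
      have hvD := allD b hab.ne' hv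
      exact ⟨u, ⟨hu, (hD _ _ this).2 hvD⟩, v, ⟨hv, hvD⟩, this⟩
    by_cases hbp : b = p
    · subst hbp
      have := pedge a hab.symm v hv u hu huv.symm
      have huD := allD a hap hu
      exact ⟨u, ⟨hu, huD⟩, v, ⟨hv, (hD _ _ this).2 huD⟩, this.symm⟩
    refine ⟨u, ⟨hu, allD a hap hu⟩, v, ⟨hv, allD b hbp hv⟩, adjR u v ?_ ?_ huv⟩
    · rintro rfl; exact hp a hap hu
    · rintro rfl; exact hp b hbp hv

/-- A vertex `v` all of whose neighbours are endpoints of one edge `uw` creates no `K`-minor. -/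
lemma minor_triangle (hK : GoodMinor K) {v u w : V} (hv : ∀ t, R'.Adj v t → t = u ∨ t = w)
    (huw : R.Adj u w) (h : ∀ a b, a ≠ v → b ≠ v → R'.Adj a b → R.Adj a b) :
    IsMinor K R' → IsMinor K R := by
  rintro ⟨f, h1, h2, h3⟩
  classical
  have hdis : ∀ a b z, z ∈ f a → z ∈ f b → a = b := by
    intro a b z ha hb
    by_contra hne
    exact Set.disjoint_left.1 (h2 a b hne) ha hb
  have hvne : ∀ t, R'.Adj v t → t ≠ v := fun t ht => ht.ne.symm
  -- whenever `v ∈ f a`, some neighbour `r` of `v` in `f a` can take over its role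
  have key : ∀ a, v ∈ f a → ∃ r ∈ f a, r ≠ v ∧ ∀ t, R'.Adj v t → t = r ∨ R.Adj r t := by
    intro a ha
    by_cases hn : ∃ r ∈ f a, R'.Adj v r
    · obtain ⟨r, hr, hvr⟩ := hn
      refine ⟨r, hr, hvr.ne', fun t ht => ?_⟩
      rcases hv r hvr with rfl | rfl <;> rcases hv t ht with rfl | rfl
      · exact .inl rfl
      · exact .inr huw
      · exact .inr huw.symm
      · exact .inl rfl
    · exfalso
      push Not at hn
      have hone : ∀ z ∈ f a, z = v := by
        intro z hz
        refine conn_closed (h1 a) (fun q => (q : V) = v) ?_ (x := ⟨v, ha⟩) rfl ⟨z, hz⟩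
        rintro ⟨s, hs⟩ ⟨t, ht⟩ hst rfl
        exact absurd hst (hn t ht)
      have nb : ∀ b, K.Adj a b → u ∈ f b ∨ w ∈ f b := by
        intro b hab
        obtain ⟨s, hs, t, ht, hst⟩ := h3 a b hab
        rw [hone s hs] at hst
        rcases hv t hst with rfl | rfl
        · exact .inl ht
        · exact .inr ht
      obtain ⟨b₁, b₂, b₃, h12, h13, h23, k1, k2, k3⟩ := hK.deg a
      rcases nb _ k1 with e1 | e1 <;> rcases nb _ k2 with e2 | e2 <;> rcases nb _ k3 with e3 | e3 <;>
        first
          | exact h12 (hdis _ _ _ e1 e2)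
          | exact h13 (hdis _ _ _ e1 e3)
          | exact h23 (hdis _ _ _ e2 e3)
  refine ⟨fun a => f a \ {v}, fun a => ?_, fun a b hab =>
    (h2 a b hab).mono Set.sdiff_subset Set.sdiff_subset, ?_⟩
  · by_cases ha : v ∈ f a
    · obtain ⟨r, hr, hrv, hrt⟩ := key a ha
      refine conn_tool (h1 a)
        (fun q => if h : (q : V) = v then ⟨r, hr, hrv⟩ else ⟨q, q.2, h⟩) ?_ ?_
      · rintro ⟨s, hs⟩ ⟨t, ht⟩ hst
        have hst : R'.Adj s t := hst
        by_cases hsv : s = v <;> by_cases htv : t = v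
        · subst hsv; subst htv; exact absurd hst (R'.loopless.irrefl _)
        · subst hsv
          simp only [htv, dif_pos, dif_neg, not_false_eq_true]
          rcases hrt t hst with rfl | h'
          · exact Reachable.refl _
          · exact Adj.reachable h'
        · subst htv
          simp only [hsv, dif_pos, dif_neg, not_false_eq_true]
          rcases hrt s hst.symm with rfl | h'
          · exact Reachable.refl _
          · exact Adj.reachable h'.symm
        · simp only [hsv, htv, dif_neg, not_false_eq_true]
          exact Adj.reachable (h s t hsv htv hst)
      · rintro ⟨b, hb, hbv⟩
        have hbv : b ≠ v := hbv
        exact ⟨⟨b, hb⟩, by simp [hbv]⟩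
    · refine conn_tool (h1 a)
        (fun q => ⟨q, q.2, fun e => ha ((show (q : V) = v from e) ▸ q.2)⟩)
        (fun s t hst => Adj.reachable ?_) (fun b => ⟨⟨b, b.2.1⟩, Reachable.refl _⟩)
      refine h s t ?_ ?_ hst
      · intro e; exact ha (e ▸ s.2)
      · intro e; exact ha (e ▸ t.2)
  · have half : ∀ a b, K.Adj a b → ∀ t ∈ f b, v ∈ f a → R'.Adj v t →
        ∃ u ∈ f a \ {v}, R.Adj u t := by
      intro a b hab t ht hva hvt
      obtain ⟨r, hr, hrv, hrt⟩ := key a hva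
      rcases hrt t hvt with rfl | h'
      · exact absurd (hdis _ _ _ hr ht) hab.ne
      · exact ⟨r, ⟨hr, hrv⟩, h'⟩
    intro a b hab
    obtain ⟨s, hs, t, ht, hst⟩ := h3 a b hab
    by_cases hsv : s = v
    · subst hsv
      obtain ⟨r, hr, hrt⟩ := half a b hab t ht hs hst
      exact ⟨r, hr, t, ⟨ht, hvne t hst⟩, hrt⟩
    by_cases htv : t = v
    · subst htv
      obtain ⟨r, hr, hrt⟩ := half b a hab.symm s hs ht hst.symm
      exact ⟨s, ⟨hs, hsv⟩, r, hr, hrt.symm⟩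
    exact ⟨s, ⟨hs, hsv⟩, t, ⟨ht, htv⟩, h s t hsv htv hst⟩

/-- Replacing a path `u v w` by the edge `uw` (isolating `v`) creates no `K`-minor. -/
lemma minor_contract (hK : GoodMinor K) {v u w : V} (hv : ∀ t, ¬ R'.Adj v t)
    (hvu : R.Adj v u) (hvw : R.Adj v w)
    (h : ∀ a b, R'.Adj a b → R.Adj a b ∨ (a = u ∧ b = w) ∨ (a = w ∧ b = u)) :
    IsMinor K R' → IsMinor K R := by
  rintro ⟨f, h1, h2, h3⟩
  classical
  have hvf : ∀ a, v ∉ f a := by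
    intro a ha
    have hone : ∀ z ∈ f a, z = v := by
      intro z hz
      refine conn_closed (h1 a) (fun q => (q : V) = v) ?_ (x := ⟨v, ha⟩) rfl ⟨z, hz⟩
      rintro ⟨s, hs⟩ ⟨t, ht⟩ hst rfl
      exact absurd hst (hv t)
    obtain ⟨b, -, -, -, -, -, hab, -⟩ := hK.deg a
    obtain ⟨s, hs, t, ht, hst⟩ := h3 a b hab
    rw [hone s hs] at hst
    exact hv t hst
  refine ⟨fun a => f a ∪ {z | z = v ∧ u ∈ f a}, fun a => ?_, fun a b hab => ?_, fun a b hab => ?_⟩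
  · have hpath : ∀ (hu : u ∈ f a) (hw : w ∈ f a),
        (R.induce (f a ∪ {z | z = v ∧ u ∈ f a})).Reachable ⟨u, .inl hu⟩ ⟨w, .inl hw⟩ := by
      intro hu hw
      let z : (f a ∪ {z | z = v ∧ u ∈ f a} : Set V) := ⟨v, .inr ⟨rfl, hu⟩⟩
      have e1 : (R.induce (f a ∪ {z | z = v ∧ u ∈ f a})).Adj ⟨u, .inl hu⟩ z := hvu.symm
      have e2 : (R.induce (f a ∪ {z | z = v ∧ u ∈ f a})).Adj z ⟨w, .inl hw⟩ := hvw
      exact e1.reachable.trans e2.reachable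
    refine conn_tool (h1 a) (fun q => ⟨q, .inl q.2⟩) ?_ ?_
    · rintro ⟨s, hs⟩ ⟨t, ht⟩ hst
      rcases h s t hst with h' | ⟨rfl, rfl⟩ | ⟨rfl, rfl⟩
      · exact Adj.reachable h'
      · exact hpath hs ht
      · exact (hpath ht hs).symm
    · rintro ⟨b, hb | ⟨rfl, hb⟩⟩
      · exact ⟨⟨b, hb⟩, Reachable.refl _⟩
      · exact ⟨⟨u, hb⟩, Adj.reachable hvu⟩
  · have hd := h2 a b hab
    rw [Set.disjoint_left] at hd ⊢
    rintro z (hz | ⟨rfl, hz⟩) (hz' | ⟨e, hz'⟩)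
    · exact hd hz hz'
    · exact hvf a (e ▸ hz)
    · exact hvf b hz'
    · exact hd hz hz'
  · obtain ⟨s, hs, t, ht, hst⟩ := h3 a b hab
    rcases h s t hst with h' | ⟨rfl, rfl⟩ | ⟨rfl, rfl⟩
    · exact ⟨s, .inl hs, t, .inl ht, h'⟩
    · exact ⟨v, .inr ⟨rfl, hs⟩, t, .inl ht, hvw⟩
    · exact ⟨s, .inl hs, v, .inr ⟨rfl, ht⟩, hvw.symm⟩

lemma planar_of_minor (h5 : ∀ {κ : Type} {K : SimpleGraph κ}, GoodMinor K → IsMinor K R' →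
    IsMinor K R) (h : IsPlanar R) : IsPlanar R' :=
  ⟨fun hm => h.1 (h5 good_K5 hm), fun hm => h.2 (h5 good_K33 hm)⟩

lemma planar_mono (h : R' ≤ R) (hR : IsPlanar R) : IsPlanar R' :=
  planar_of_minor (fun _ => minor_mono h) hR

lemma planar_bridge (C : Set V) (hC : ∀ a b, R.Adj a b → (a ∈ C ↔ b ∈ C))
    {x y : V} (hx : x ∈ C) (hy : y ∉ C)
    (h : ∀ a b, R'.Adj a b → R.Adj a b ∨ (a = x ∧ b = y) ∨ (a = y ∧ b = x)) (hR : IsPlanar R) :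
    IsPlanar R' :=
  planar_of_minor (fun hK => minor_bridge hK C hC hx hy h) hR

lemma planar_triangle {v u w : V} (hv : ∀ t, R'.Adj v t → t = u ∨ t = w)
    (huw : R.Adj u w) (h : ∀ a b, a ≠ v → b ≠ v → R'.Adj a b → R.Adj a b) (hR : IsPlanar R) :
    IsPlanar R' :=
  planar_of_minor (fun hK => minor_triangle hK hv huw h) hR

lemma planar_contract {v u w : V} (hv : ∀ t, ¬ R'.Adj v t)
    (hvu : R.Adj v u) (hvw : R.Adj v w)
    (h : ∀ a b, R'.Adj a b → R.Adj a b ∨ (a = u ∧ b = w) ∨ (a = w ∧ b = u)) (hR : IsPlanar R) :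
    IsPlanar R' :=
  planar_of_minor (fun hK => minor_contract hK hv hvu hvw h) hR

/-- Attaching a pendant vertex `v` to `u` preserves planarity. -/
lemma planar_leaf {v u : V} (hv : ∀ t, R'.Adj v t → t = u)
    (h : ∀ a b, a ≠ v → b ≠ v → R'.Adj a b → R.Adj a b) (hR : IsPlanar R) : IsPlanar R' := by
  by_cases huv : u = v
  · refine planar_mono (fun a b hab => h a b ?_ ?_ hab) hR
    · rintro rfl; exact hab.ne' ((hv b hab).trans huv)
    · rintro rfl; exact hab.ne ((hv a hab.symm).trans huv)
  -- delete the edges of `R` at `v`; then `{v}` is a component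
  let R₀ : SimpleGraph V :=
    { Adj := fun a b => R.Adj a b ∧ a ≠ v ∧ b ≠ v
      symm := ⟨fun a b h => ⟨h.1.symm, h.2.2, h.2.1⟩⟩
      loopless := ⟨fun a h => R.loopless.irrefl a h.1⟩ }
  have h0 : IsPlanar R₀ := planar_mono (fun a b h => h.1) hR
  refine planar_bridge {v} (x := v) (y := u) ?_ rfl huv (fun a b hab => ?_) h0
  · rintro a b ⟨_, ha, hb⟩
    simp [ha, hb]
  · by_cases ha : a = v
    · subst ha
      exact .inr (.inl ⟨rfl, hv b hab⟩)
    by_cases hb : b = v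
    · subst hb
      exact .inr (.inr ⟨hv a hab.symm, rfl⟩)
    exact .inl ⟨h a b ha hb hab, ha, hb⟩

end Minors

/-! ### Basic graph operations -/

section Ops
variable {V : Type*}

/-- The spanning subgraph of `G` that keeps exactly the edges inside `S`. -/
def restr (G : SimpleGraph V) (S : Set V) : SimpleGraph V where
  Adj a b := G.Adj a b ∧ a ∈ S ∧ b ∈ S
  symm := ⟨fun _ _ h => ⟨h.1.symm, h.2.2, h.2.1⟩⟩
  loopless := ⟨fun a h => G.loopless.irrefl a h.1⟩

@[simp] lemma restr_adj (G : SimpleGraph V) (S : Set V) (a b : V) :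
    (restr G S).Adj a b ↔ G.Adj a b ∧ a ∈ S ∧ b ∈ S := Iff.rfl

lemma restr_le (G : SimpleGraph V) (S : Set V) : restr G S ≤ G := fun _ _ h => h.1

lemma edgeCount_sup_edge [Finite V] (G : SimpleGraph V) {x y : V} (hxy : x ≠ y)
    (h : ¬ G.Adj x y) : edgeCount (G ⊔ edge x y) = edgeCount G + 1 := by
  unfold edgeCount
  rw [edgeSet_sup, edgeSet_edge_of_ne hxy, Set.union_singleton, Set.ncard_insert_of_notMem]
  simpa using h

lemma edgeCount_eq_add_one [Finite V] {G G' : SimpleGraph V} {x y : V} (hxy : x ≠ y)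
    (h : ¬ G'.Adj x y)
    (hG : ∀ a b, G.Adj a b ↔ G'.Adj a b ∨ (a = x ∧ b = y) ∨ (a = y ∧ b = x)) :
    edgeCount G = edgeCount G' + 1 := by
  rw [← edgeCount_sup_edge G' hxy h]
  congr 1
  ext a b
  rw [hG, sup_adj, edge_adj]
  constructor
  · rintro (h | ⟨rfl, rfl⟩ | ⟨rfl, rfl⟩)
    · exact .inl h
    · exact .inr ⟨.inl ⟨rfl, rfl⟩, hxy⟩
    · exact .inr ⟨.inr ⟨rfl, rfl⟩, hxy.symm⟩
  · rintro (h | ⟨h, _⟩)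
    · exact .inl h
    · exact .inr h

lemma sup_edge_cases {G : SimpleGraph V} {x y a b : V} (h : (G ⊔ edge x y).Adj a b) :
    G.Adj a b ∨ (a = x ∧ b = y) ∨ (a = y ∧ b = x) := by
  rw [sup_adj, edge_adj] at h
  tauto

lemma sum_vertexDegree [Fintype V] (G : SimpleGraph V) :
    ∑ v, vertexDegree G v = 2 * edgeCount G := by
  classical
  have := G.sum_degrees_eq_twice_card_edges
  rw [edgeCount, Set.ncard_eq_toFinset_card', ← edgeFinset, ← this]
  refine Finset.sum_congr rfl fun v _ => ?_
  rw [vertexDegree, Set.ncard_eq_toFinset_card']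
  rfl

/-- Placing a forest on a set `W` of isolated vertices preserves planarity. -/
lemma planar_sup_forest [Finite V] {G : SimpleGraph V} (W : Set V)
    (hG : ∀ a b, G.Adj a b → a ∉ W) (hp : IsPlanar G) :
    ∀ (k : ℕ) (F : SimpleGraph V), F.edgeSet.ncard = k → F.IsAcyclic →
      (∀ a b, F.Adj a b → a ∈ W) → IsPlanar (G ⊔ F) := by
  intro k
  induction k with
  | zero =>
    intro F hk _ _
    rw [Set.ncard_eq_zero] at hk
    have : F = ⊥ := edgeSet_eq_empty.1 hk
    simpa [this] using hp
  | succ k ih =>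
    intro F hk hF hW
    obtain ⟨e, he⟩ : F.edgeSet.Nonempty := by
      rw [← Set.ncard_pos]; omega
    induction e with | _ x y =>
    have hxy : F.Adj x y := he
    have hbr := isBridge_iff.1 (isAcyclic_iff_forall_adj_isBridge.1 hF hxy)
    set F' : SimpleGraph V := F.deleteEdges {s(x, y)} with hF'
    have hle : F' ≤ F := deleteEdges_le _
    have hk' : F'.edgeSet.ncard = k := by
      rw [hF', edgeSet_deleteEdges, Set.ncard_sdiff_singleton_of_mem he, hk]
      rfl
    have hpl := ih F' hk' (hF.anti hle) (fun a b h => hW a b (hle h))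
    refine planar_bridge {z | F'.Reachable x z} (x := x) (y := y) ?_ (Reachable.refl _) hbr ?_ hpl
    · have half : ∀ a b, (G ⊔ F').Adj a b → F'.Reachable x a → F'.Reachable x b := by
        rintro a b (hab | hab) ha
        · exfalso
          refine hG a b hab ?_
          -- a vertex reachable from `x` in `F'` lies in `W`
          obtain ⟨p⟩ := ha.symm
          cases p with
          | nil => exact hW _ _ hxy
          | cons h _ => exact hW _ _ (hle h)
        · exact ha.trans hab.reachable
      exact fun a b h => ⟨half a b h, half b a h.symm⟩
    · rintro a b (hab | hab)
      · exact .inl (.inl hab)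
      · by_cases h : s(a, b) = s(x, y)
        · right
          simpa using h
        · left; right
          rw [hF', deleteEdges_adj]
          exact ⟨hab, h⟩

end Ops

/-! ### Addable edges along paths of vertices of degree two -/

section Paths
variable {V : Type*}

/-- `DegPath R x y l`: the walk `x :: l` ends in `y`, and every interior vertex has no neighbours
besides its predecessor and its successor. -/
inductive DegPath (R : SimpleGraph V) : V → V → List V → Prop
  | single {x y} : R.Adj x y → DegPath R x y [y]
  | cons {x z z' y l} : R.Adj x z → (∀ t, R.Adj z t → t = x ∨ t = z') → DegPath R z y (z' :: l) →
      DegPath R x y (z :: z' :: l)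

lemma DegPath.transfer {R R' : SimpleGraph V} {a y : V} {l : List V} (h : DegPath R a y l) :
    (∀ s t, s ∈ a :: l → t ∈ a :: l → R.Adj s t → R'.Adj s t) →
    (∀ b ∈ l, ∀ t, R'.Adj b t → R.Adj b t) → DegPath R' a y l := by
  induction h with
  | single h => exact fun h1 _ => .single (h1 _ _ (by simp) (by simp) h)
  | cons h hz _ ih =>
    intro h1 h2
    exact .cons (h1 _ _ (by simp) (by simp) h) (fun t ht => hz t (h2 _ (by simp) t ht))
      (ih (fun s t hs ht => h1 s t (List.mem_cons_of_mem _ hs) (List.mem_cons_of_mem _ ht))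
        (fun b hb => h2 b (List.mem_cons_of_mem _ hb)))

/-- The ends of a path whose interior vertices have degree two may be joined: contract the first
interior vertex, join the ends of the shorter path, and put the vertex back next to the edge
that replaced it. -/
lemma planar_of_degPath : ∀ (l : List V) (R : SimpleGraph V) (x y : V), IsPlanar R →
    DegPath R x y l → (x :: l).Nodup → IsPlanar (R ⊔ edge x y) := by
  intro l
  induction l with
  | nil => intro R x y _ h; cases h
  | cons z l ih =>
    intro R x y hp h hn
    cases h with
    | single h =>
      refine planar_mono (fun a b hab => ?_) hp
      rcases sup_edge_cases hab with h' | ⟨rfl, rfl⟩ | ⟨rfl, rfl⟩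
      exacts [h', h, h.symm]
    | @cons _ _ z' _ l h hz hd =>
      simp only [List.nodup_cons, List.mem_cons, not_or] at hn
      obtain ⟨⟨hxz, hxz', hxl⟩, ⟨hzz', hzl⟩, hz'l, hn⟩ := hn
      have hzz'R : R.Adj z z' := by
        cases hd with
        | single h => exact h
        | cons h _ _ => exact h
      set R' : SimpleGraph V := restr R {z}ᶜ ⊔ edge x z' with hR'
      have hR'p : IsPlanar R' := by
        refine planar_contract (v := z) (u := x) (w := z') ?_ h.symm hzz'R ?_ hp
        · intro t ht
          rcases sup_edge_cases ht with h' | ⟨e, _⟩ | ⟨e, _⟩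
          · exact h'.2.1 rfl
          · exact hxz e.symm
          · exact hzz' e
        · intro a b hab
          rcases sup_edge_cases hab with h' | h'
          · exact .inl h'.1
          · exact .inr h'
      have hR'xz' : R'.Adj x z' := by
        rw [hR', sup_adj, edge_adj]; exact .inr ⟨.inl ⟨rfl, rfl⟩, hxz'⟩
      have hup : ∀ s t, s ≠ z → t ≠ z → R.Adj s t → R'.Adj s t :=
        fun s t hs ht hst => .inl ⟨hst, hs, ht⟩
      have hdown : ∀ b, b ≠ x → b ≠ z' → ∀ t, R'.Adj b t → R.Adj b t := by
        intro b hb hb' t ht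
        rcases sup_edge_cases ht with h' | ⟨e, _⟩ | ⟨e, _⟩
        · exact h'.1
        · exact absurd e hb
        · exact absurd e hb'
      have hd' : DegPath R' x y (z' :: l) := by
        cases hd with
        | single h => exact .single hR'xz'
        | @cons _ _ z'' _ l h3 hz3 hd3 =>
          refine .cons hR'xz' (fun t ht => ?_) (hd3.transfer (fun s t hs ht hst => ?_)
            (fun b hb t ht => ?_))
          · rcases sup_edge_cases ht with h' | ⟨e, _⟩ | ⟨_, e⟩
            · rcases hz3 t h'.1 with rfl | e
              · exact absurd rfl h'.2.2
              · exact .inr e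
            · exact absurd e.symm hxz'
            · exact .inl e
          · refine hup s t ?_ ?_ hst
            · rintro rfl
              rcases List.mem_cons.1 hs with e | e
              · exact hzz' e
              · exact hzl e
            · rintro rfl
              rcases List.mem_cons.1 ht with e | e
              · exact hzz' e
              · exact hzl e
          · refine hdown b ?_ ?_ t ht
            · rintro rfl; exact hxl hb
            · rintro rfl; exact hz'l hb
      have hfin := ih R' x y hR'p hd' (by simp [hxz', hxl, hz'l, hn])
      have hyz : y ≠ z := by
        have : ∀ {R : SimpleGraph V} {a y l}, DegPath R a y l → y ∈ l := by
          intro R a y l h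
          induction h with
          | single _ => simp
          | cons _ _ _ ih => exact List.mem_cons_of_mem _ ih
        have hy := this hd
        rintro rfl
        rcases List.mem_cons.1 hy with e | e
        · exact hzz' e
        · exact hzl e
      refine planar_triangle (v := z) (u := x) (w := z') ?_ (Or.inl hR'xz') ?_ hfin
      · intro t ht
        rcases sup_edge_cases ht with h' | ⟨e, _⟩ | ⟨e, _⟩
        · exact hz t h'
        · exact absurd e.symm hxz
        · exact absurd e.symm hyz
      · rintro a b ha hb (hab | hab)
        · exact .inl (hup a b ha hb hab)
        · exact .inr hab

lemma degPath_of_walk {R B : SimpleGraph V} (hle : B ≤ R)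
    (hB : ∀ a b c, B.Adj a b → B.Adj b c → a ≠ c → ∀ t, R.Adj b t → t = a ∨ t = c)
    {x y : V} (p : B.Walk x y) : p.IsPath → x ≠ y → DegPath R x y p.support.tail := by
  induction p with
  | nil => intro _ h; exact absurd rfl h
  | @cons x z y h p ih =>
    intro hp hxy
    rw [Walk.cons_isPath_iff] at hp
    cases p with
    | nil => exact .single (hle h)
    | @cons _ z' _ h' p' =>
      have hzy : z ≠ y := by
        rintro rfl
        have := hp.1
        rw [Walk.cons_isPath_iff] at this
        exact this.2 (Walk.end_mem_support _)
      have hd := ih hp.1 hzy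
      have hs : ∀ {a b : V} (q : B.Walk a b), q.support = a :: q.support.tail := fun q => by
        cases q <;> rfl
      simp only [Walk.support_cons, List.tail_cons] at hd ⊢
      rw [hs p'] at hd ⊢
      refine .cons (hle h) (hB x z z' h h' ?_) hd
      rintro rfl
      apply hp.2
      simp [Walk.support_cons]

end Paths

/-! ### Every sparse planar graph has many addable edges -/

section Addable
variable {V : Type*} [Fintype V]

/-- `StripData G S ℓ`: the graph `G[S]` arises from `G` by repeatedly deleting vertices of degree
one, and `ℓ` sends each vertex of `G` to the vertex of `S` at which its hanging tree is attached.
An edge that may be added between the attachment points may be added between the vertices. -/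
structure StripData (G : SimpleGraph V) (S : Finset V) (ℓ : V → V) : Prop where
  mem : ∀ x, ℓ x ∈ S
  fix : ∀ x ∈ S, ℓ x = x
  count : edgeCount (restr G S) + Fintype.card V = edgeCount G + S.card
  lift : ∀ x y, IsPlanar (restr G S ⊔ edge (ℓ x) (ℓ y)) → IsPlanar (G ⊔ edge x y)

lemma StripData.step {G : SimpleGraph V} {S : Finset V} {ℓ : V → V} (h : StripData G S ℓ)
    {v : V} (hv : v ∈ S) (hd : vertexDegree (restr G S) v = 1) :
    ∃ S' ℓ', StripData G S' ℓ' ∧ S'.card < S.card := by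
  classical
  obtain ⟨u, hu⟩ := Set.ncard_eq_one.1 hd
  have hadj : ∀ t, (restr G S).Adj v t ↔ t = u := by
    intro t
    have : t ∈ (restr G S).neighborSet v ↔ t ∈ ({u} : Set V) := by rw [hu]
    simpa using this
  have hvu : (restr G S).Adj v u := (hadj u).2 rfl
  have huv : u ≠ v := hvu.ne'
  have huS : u ∈ S := hvu.2.2
  set R := restr G S with hR
  set R' := restr G (S.erase v : Finset V) with hR'
  have down : ∀ a b, a ≠ v → b ≠ v → R.Adj a b → R'.Adj a b := by
    rintro a b ha hb ⟨h1, h2, h3⟩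
    exact ⟨h1, Finset.mem_coe.2 (Finset.mem_erase.2 ⟨ha, h2⟩),
      Finset.mem_coe.2 (Finset.mem_erase.2 ⟨hb, h3⟩)⟩
  have up : ∀ a b, R'.Adj a b → R.Adj a b ∧ a ≠ v ∧ b ≠ v := by
    rintro a b ⟨h1, h2, h3⟩
    have h2 := Finset.mem_erase.1 (Finset.mem_coe.1 h2)
    have h3 := Finset.mem_erase.1 (Finset.mem_coe.1 h3)
    exact ⟨⟨h1, h2.2, h3.2⟩, h2.1, h3.1⟩
  -- the two planarity facts behind re-attaching `v`
  have lift1 : ∀ p q, p ≠ v → q ≠ v → IsPlanar (R' ⊔ edge p q) → IsPlanar (R ⊔ edge p q) := by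
    intro p q hp hq hpl
    refine planar_leaf (v := v) (u := u) (fun t ht => ?_) (fun a b ha hb hab => ?_) hpl
    · rcases sup_edge_cases ht with h' | ⟨e, _⟩ | ⟨e, _⟩
      · exact (hadj t).1 h'
      · exact absurd e.symm hp
      · exact absurd e.symm hq
    · rcases hab with hab | hab
      · exact .inl (down a b ha hb hab)
      · exact .inr hab
  have lift2 : ∀ q, q ≠ v → IsPlanar (R' ⊔ edge u q) → IsPlanar (R ⊔ edge v q) := by
    intro q hq hpl
    by_cases hqu : q = u
    · subst hqu
      refine planar_mono (fun a b hab => ?_) (lift1 q q hq hq hpl)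
      rcases sup_edge_cases hab with h' | ⟨rfl, rfl⟩ | ⟨rfl, rfl⟩
      · exact .inl h'
      · exact .inl hvu
      · exact .inl hvu.symm
    · refine planar_triangle (v := v) (u := u) (w := q) (fun t ht => ?_) ?_
        (fun a b ha hb hab => ?_) hpl
      · rcases sup_edge_cases ht with h' | ⟨_, e⟩ | ⟨e, _⟩
        · exact .inl ((hadj t).1 h')
        · exact .inr e
        · exact absurd e.symm hq
      · rw [sup_adj, edge_adj]; exact .inr ⟨.inl ⟨rfl, rfl⟩, fun e => hqu e.symm⟩
      · rcases sup_edge_cases hab with h' | ⟨e, _⟩ | ⟨_, e⟩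
        · exact .inl (down a b ha hb h')
        · exact absurd e ha
        · exact absurd e hb
  refine ⟨S.erase v, fun x => if ℓ x = v then u else ℓ x, ⟨?_, ?_, ?_, ?_⟩,
    Finset.card_erase_lt_of_mem hv⟩
  · intro x
    by_cases hx : ℓ x = v
    · simp only [hx, if_true]; exact Finset.mem_erase.2 ⟨huv, huS⟩
    · simp only [hx, if_false]; exact Finset.mem_erase.2 ⟨hx, h.mem x⟩
  · intro x hx
    have hx := Finset.mem_erase.1 hx
    simp [h.fix x hx.2, hx.1]
  · have e1 : edgeCount R = edgeCount R' + 1 := by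
      refine edgeCount_eq_add_one (x := v) (y := u) huv.symm (fun h => (up _ _ h).2.1 rfl) ?_
      intro a b
      constructor
      · intro hab
        by_cases ha : a = v
        · subst ha; exact .inr (.inl ⟨rfl, (hadj b).1 hab⟩)
        by_cases hb : b = v
        · subst hb; exact .inr (.inr ⟨(hadj a).1 hab.symm, rfl⟩)
        exact .inl (down a b ha hb hab)
      · rintro (h' | ⟨rfl, rfl⟩ | ⟨rfl, rfl⟩)
        · exact (up a b h').1
        · exact hvu
        · exact hvu.symm
    have e2 := h.count
    have e3 := Finset.card_erase_add_one hv
    rw [← hR] at e2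
    change edgeCount R' + Fintype.card V = edgeCount G + (S.erase v).card
    omega
  · intro x y hpl
    apply h.lift
    by_cases hx : ℓ x = v <;> by_cases hy : ℓ y = v
    · simp only [hx, hy, if_true] at hpl ⊢
      refine planar_mono (fun a b hab => ?_) (lift1 u u huv huv hpl)
      rcases sup_edge_cases hab with h' | ⟨rfl, rfl⟩ | ⟨rfl, rfl⟩
      · exact .inl h'
      · exact absurd hab ((R ⊔ edge _ _).loopless.irrefl _)
      · exact absurd hab ((R ⊔ edge _ _).loopless.irrefl _)
    · simp only [hx, hy, if_true, if_false] at hpl ⊢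
      exact lift2 _ hy hpl
    · simp only [hx, hy, if_true, if_false] at hpl ⊢
      rw [edge_comm] at hpl ⊢
      exact lift2 _ hx hpl
    · simp only [hx, hy, if_false] at hpl
      exact lift1 _ _ hx hy hpl

/-- Deleting vertices of degree one for as long as possible. -/
lemma exists_strip (G : SimpleGraph V) : ∃ S ℓ, StripData G S ℓ ∧
    ∀ v ∈ S, vertexDegree (restr G S) v ≠ 1 := by
  classical
  have h0 : ∃ k S ℓ, StripData G S ℓ ∧ S.card = k := by
    refine ⟨_, Finset.univ, id, ⟨fun _ => Finset.mem_univ _, fun _ _ => rfl, ?_, ?_⟩, rfl⟩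
    · have : restr G (Finset.univ : Finset V) = G := by ext; simp
      rw [this]; rfl
    · have : restr G (Finset.univ : Finset V) = G := by ext; simp
      rw [this]; exact fun _ _ h => h
  obtain ⟨S, ℓ, hS, hk⟩ := Nat.find_spec h0
  refine ⟨S, ℓ, hS, fun v hv hd => ?_⟩
  obtain ⟨S', ℓ', hS', hlt⟩ := hS.step hv hd
  exact Nat.find_min h0 (hk ▸ hlt) ⟨S', ℓ', hS', rfl⟩

open Classical in
/-- Ordered pairs `(x, y)` (equal and adjacent ones included) such that `G + xy` is planar. -/
noncomputable def planarPairs (G : SimpleGraph V) : Finset (V × V) :=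
  Finset.univ.filter fun p => IsPlanar (G ⊔ edge p.1 p.2)

/-- If `P` contains all pairs with equal labels and there are `|L|` labels, then `P` contains at
least a proportion `1 / |L|` of all pairs, by the Cauchy-Schwarz inequality. -/
lemma card_sq_le_of_label {β : Type*} (f : V → β) (L : Finset β) (hf : ∀ x, f x ∈ L)
    (P : Finset (V × V)) (hP : ∀ x y, f x = f y → (x, y) ∈ P) :
    Fintype.card V * Fintype.card V ≤ L.card * P.card := by
  classical
  have h1 : Fintype.card V = ∑ c ∈ L, (Finset.univ.filter fun x => f x = c).card := by
    rw [← Finset.card_univ]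
    exact Finset.card_eq_sum_card_fiberwise (fun x _ => hf x)
  have h2 : ∑ c ∈ L, (Finset.univ.filter fun x => f x = c).card ^ 2 ≤ P.card := by
    have e : ∀ c ∈ L, (Finset.univ.filter fun x => f x = c).card ^ 2
        ≤ (P.filter fun p => f p.1 = c).card := by
      intro c _
      rw [sq, ← Finset.card_product]
      refine Finset.card_le_card ?_
      rintro ⟨x, y⟩ h
      simp only [Finset.mem_product, Finset.mem_filter, Finset.mem_univ, true_and] at h ⊢
      exact ⟨hP x y (h.1.trans h.2.symm), h.1⟩
    refine (Finset.sum_le_sum e).trans (le_of_eq ?_)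
    exact (Finset.card_eq_sum_card_fiberwise (fun p _ => hf p.1)).symm
  calc Fintype.card V * Fintype.card V
      = (∑ c ∈ L, (Finset.univ.filter fun x => f x = c).card) ^ 2 := by rw [← h1, sq]
    _ ≤ L.card * ∑ c ∈ L, (Finset.univ.filter fun x => f x = c).card ^ 2 := by
        exact_mod_cast sq_sum_le_card_mul_sum_sq
    _ ≤ L.card * P.card := Nat.mul_le_mul_left _ h2

/-- After stripping hanging trees, the graph falls into its vertices of degree at least three and
the components of the rest, which are paths and cycles of vertices of degree at most two. Either
many of these are whole components, and then every vertex can be joined to many of them, or there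
are few pieces altogether, and then many pairs of vertices belong to the same piece. -/
lemma planarPairs_large (G : SimpleGraph V) (hG : IsPlanar G) (e q : ℕ)
    (he : edgeCount G ≤ Fintype.card V + e) :
    q * Fintype.card V ≤ (planarPairs G).card ∨
      Fintype.card V * Fintype.card V ≤ (8 * e + 9 * q) * (planarPairs G).card := by
  classical
  obtain ⟨S, ℓ, hS, hdeg⟩ := exists_strip G
  set R := restr G S with hR
  have hRp : IsPlanar R := planar_mono (restr_le _ _) hG
  set D : Finset V := S.filter fun v => 3 ≤ vertexDegree R v with hD
  set B := restr R (D : Set V)ᶜ with hB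
  have hBR : B ≤ R := restr_le _ _
  let comp : V → B.ConnectedComponent := B.connectedComponentMk
  set Lab : Finset B.ConnectedComponent := Finset.univ.image fun x => comp (ℓ x) with hLab
  set Cl : Finset B.ConnectedComponent := Lab.filter fun c =>
    ∀ a, comp a = c → a ∉ D ∧ ∀ b, R.Adj a b → b ∉ D with hCl
  have hB2 : ∀ a b c, B.Adj a b → B.Adj b c → a ≠ c → ∀ t, R.Adj b t → t = a ∨ t = c := by
    intro a b c hab hbc hac t ht
    by_contra hcon
    push Not at hcon
    have hbD : b ∉ D := hbc.2.1
    apply hbD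
    refine Finset.mem_filter.2 ⟨ht.2.1, ?_⟩
    have hsub : (({a, c, t} : Finset V) : Set V) ⊆ R.neighborSet b := by
      intro z hz
      simp only [Finset.coe_insert, Finset.coe_singleton, Set.mem_insert_iff,
        Set.mem_singleton_iff] at hz
      rcases hz with rfl | rfl | rfl
      · exact (hBR hab).symm
      · exact hBR hbc
      · exact ht
    have h3 : ({a, c, t} : Finset V).card = 3 := by
      rw [Finset.card_eq_three]
      exact ⟨a, c, t, hac, hcon.1.symm, hcon.2.symm, rfl⟩
    have := Set.ncard_le_ncard hsub (Set.toFinite _)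
    rw [Set.ncard_coe_finset, h3] at this
    exact this
  -- vertices whose attachment points are in one piece
  have same : ∀ x y, comp (ℓ x) = comp (ℓ y) → (x, y) ∈ planarPairs G := by
    intro x y hxy
    refine Finset.mem_filter.2 ⟨Finset.mem_univ _, hS.lift x y ?_⟩
    by_cases hne : ℓ x = ℓ y
    · rw [hne, edge_self_eq_bot, sup_bot_eq]; exact hRp
    · obtain ⟨p, hp⟩ := (ConnectedComponent.exact hxy).exists_isPath
      refine planar_of_degPath _ R _ _ hRp (degPath_of_walk hBR hB2 p hp hne) ?_
      have hs : ∀ {a b : V} (q : B.Walk a b), q.support = a :: q.support.tail :=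
        fun q => by cases q <;> rfl
      rw [← hs p]
      exact hp.support_nodup
  -- every vertex can be joined to a closed piece that does not contain its attachment point
  have closed : ∀ c ∈ Cl, ∀ x y, comp (ℓ x) = c → comp (ℓ y) ≠ c → (x, y) ∈ planarPairs G := by
    intro c hc x y hx hy
    refine Finset.mem_filter.2 ⟨Finset.mem_univ _, hS.lift x y ?_⟩
    have hc2 := (Finset.mem_filter.1 hc).2
    refine planar_bridge {a | comp a = c} ?_ hx hy (fun a b hab => sup_edge_cases hab) hRp
    have half : ∀ a b, R.Adj a b → comp a = c → comp b = c := by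
      intro a b hab ha
      have h := hc2 a ha
      have : B.Adj a b := ⟨hab, h.1, h.2 b hab⟩
      rw [← ha]
      exact (ConnectedComponent.sound this.reachable).symm
    exact fun a b hab => ⟨half a b hab, half b a hab.symm⟩
  by_cases hq : q + 1 ≤ Cl.card
  · left
    have hrep : ∀ c ∈ Cl, ∃ x, comp (ℓ x) = c := by
      intro c hc
      obtain ⟨x, _, hx⟩ := Finset.mem_image.1 (Finset.mem_filter.1 hc).1
      exact ⟨x, hx⟩
    obtain ⟨c0, hc0⟩ : Cl.Nonempty := Finset.card_pos.1 (by omega)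
    have : Nonempty V := ⟨(hrep c0 hc0).choose⟩
    choose! rep hrep using hrep
    have h1 : ((Finset.univ : Finset V).sigma fun y => Cl.erase (comp (ℓ y))).card
        ≤ (planarPairs G).card := by
      refine Finset.card_le_card_of_injOn (fun p => (rep p.2, p.1)) ?_ ?_
      · rintro ⟨y, c⟩ h
        have h := Finset.mem_erase.1 (Finset.mem_sigma.1 h).2
        exact closed c h.2 _ y (hrep c h.2) (fun e => h.1 e.symm)
      · rintro ⟨y, c⟩ h ⟨y', c'⟩ h' heq
        have g : c ∈ Cl := (Finset.mem_erase.1 (Finset.mem_sigma.1 h).2).2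
        have g' : c' ∈ Cl := (Finset.mem_erase.1 (Finset.mem_sigma.1 h').2).2
        simp only [Prod.mk.injEq] at heq
        obtain ⟨e1, rfl⟩ := heq
        have : c = c' := by rw [← hrep c g, ← hrep c' g', e1]
        subst this
        rfl
    refine le_trans ?_ h1
    rw [Finset.card_sigma, mul_comm, ← Finset.card_univ, ← smul_eq_mul]
    refine Finset.card_nsmul_le_sum _ _ _ fun y _ => ?_
    have := Finset.pred_card_le_card_erase (s := Cl) (a := comp (ℓ y))
    omega
  · right
    have hq : Cl.card ≤ q := by omega
    set I : Finset V := S.filter fun v => vertexDegree R v = 0 with hI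
    have hIq : I.card ≤ q := by
      refine le_trans (Finset.card_le_card_of_injOn comp ?_ ?_) hq
      all_goals
        have iso : ∀ v ∈ I, ∀ t, ¬ R.Adj v t := by
          intro v hv t ht
          have h0 := (Finset.mem_filter.1 hv).2
          rw [vertexDegree, Set.ncard_eq_zero] at h0
          have : t ∈ R.neighborSet v := ht
          rw [h0] at this
          exact this
        have uniq : ∀ v ∈ I, ∀ a, comp a = comp v → a = v := by
          intro v hv a ha
          obtain ⟨p⟩ := (ConnectedComponent.exact ha).symm
          cases p with
          | nil => rfl
          | cons h _ => exact absurd (hBR h) (iso v hv _)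
      · intro v hv
        have hvS := (Finset.mem_filter.1 hv).1
        refine Finset.mem_coe.2 (Finset.mem_filter.2 ⟨Finset.mem_image.2
          ⟨v, Finset.mem_univ _, by rw [hS.fix v hvS]⟩, fun a ha => ?_⟩)
        obtain rfl := uniq v hv a ha
        refine ⟨fun h => ?_, fun b hab => absurd hab (iso a hv b)⟩
        have h1 := (Finset.mem_filter.1 h).2
        have h2 := (Finset.mem_filter.1 hv).2
        omega
      · intro v _ v' hv' h
        exact uniq v' hv' v h
    have hLabsub : Lab ⊆ Cl ∪ (D.biUnion fun d => insert (comp d)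
        ((R.neighborSet d).toFinset.image comp)) := by
      intro c hc
      by_cases hcc : c ∈ Cl
      · exact Finset.mem_union_left _ hcc
      · refine Finset.mem_union_right _ ?_
        have : ¬ ∀ a, comp a = c → a ∉ D ∧ ∀ b, R.Adj a b → b ∉ D :=
          fun h => hcc (Finset.mem_filter.2 ⟨hc, h⟩)
        push Not at this
        obtain ⟨a, rfl, ha⟩ := this
        by_cases haD : a ∈ D
        · exact Finset.mem_biUnion.2 ⟨a, haD, Finset.mem_insert_self _ _⟩
        · obtain ⟨b, hab, hbD⟩ := ha haD
          refine Finset.mem_biUnion.2 ⟨b, hbD, Finset.mem_insert_of_mem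
            (Finset.mem_image_of_mem _ ?_)⟩
          simpa using hab.symm
    have hLabcard : Lab.card ≤ q + ∑ d ∈ D, (1 + vertexDegree R d) := by
      refine (Finset.card_le_card hLabsub).trans ((Finset.card_union_le _ _).trans
        (Nat.add_le_add hq (Finset.card_biUnion_le.trans (Finset.sum_le_sum fun d _ => ?_))))
      refine (Finset.card_insert_le _ _).trans ?_
      rw [add_comm]
      refine Nat.add_le_add_left (Finset.card_image_le.trans (le_of_eq ?_)) _
      rw [vertexDegree, Set.ncard_eq_toFinset_card']
    have hsum : ∑ v ∈ S, vertexDegree R v = 2 * edgeCount R := by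
      rw [← sum_vertexDegree]
      refine Finset.sum_subset (Finset.subset_univ _) fun v _ hv => ?_
      rw [vertexDegree, Set.ncard_eq_zero]
      ext t
      simp only [mem_neighborSet, Set.mem_empty_iff_false, iff_false]
      exact fun h => hv h.2.1
    have hpt : ∀ v ∈ S, 8 + (if 3 ≤ vertexDegree R v then 1 + vertexDegree R v else 0) ≤
        4 * vertexDegree R v + (if vertexDegree R v = 0 then 8 else 0) := by
      intro v hv
      have := hdeg v hv
      split_ifs <;> omega
    have htot := Finset.sum_le_sum hpt
    rw [Finset.sum_add_distrib, Finset.sum_add_distrib, ← Finset.mul_sum, hsum,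
      ← Finset.sum_filter, ← Finset.sum_filter, ← hD, ← hI, Finset.sum_const, Finset.sum_const,
      smul_eq_mul, smul_eq_mul] at htot
    have hcnt := hS.count
    rw [← hR] at hcnt
    have hL : Lab.card ≤ 8 * e + 9 * q := by omega
    refine (card_sq_le_of_label (fun x => comp (ℓ x)) Lab (fun x =>
      Finset.mem_image_of_mem _ (Finset.mem_univ x)) _ same).trans ?_
    exact Nat.mul_le_mul_right _ hL

lemma card_pairs_le (T : Finset (Sym2 V)) [DecidableEq V] :
    (Finset.univ.filter fun p : V × V => s(p.1, p.2) ∈ T).card ≤ 2 * T.card := by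
  have : (Finset.univ.filter fun p : V × V => s(p.1, p.2) ∈ T).card ≤
      ∑ t ∈ T, 2 := by
    rw [Finset.card_eq_sum_card_fiberwise (f := fun p : V × V => s(p.1, p.2)) (t := T)
      (fun p hp => by simpa using hp)]
    refine Finset.sum_le_sum fun t _ => ?_
    induction t with | _ x y =>
    refine (Finset.card_le_card (t := {(x, y), (y, x)}) ?_).trans Finset.card_le_two
    rintro ⟨a, b⟩ h
    have h := (Finset.mem_filter.1 h).2
    simp only [Sym2.eq_iff] at h
    simp only [Finset.mem_insert, Finset.mem_singleton, Prod.mk.injEq]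
    exact h
  simpa [mul_comm] using this

lemma planarPairs_le (G : SimpleGraph V) :
    (planarPairs G).card ≤ Fintype.card V + 2 * edgeCount G + 2 * (addableSet G).ncard := by
  classical
  have hsub : planarPairs G ⊆ (Finset.univ.image fun x : V => (x, x)) ∪
      (Finset.univ.filter fun p : V × V => s(p.1, p.2) ∈ G.edgeSet.toFinset) ∪
      (Finset.univ.filter fun p : V × V => s(p.1, p.2) ∈ (addableSet G).toFinset) := by
    rintro ⟨x, y⟩ h
    have h := (Finset.mem_filter.1 h).2
    simp only [Finset.mem_union, Finset.mem_image, Finset.mem_univ, true_and, Finset.mem_filter,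
      Set.mem_toFinset]
    by_cases hxy : x = y
    · exact .inl (.inl ⟨x, by rw [hxy]⟩)
    by_cases hE : s(x, y) ∈ G.edgeSet
    · exact .inl (.inr hE)
    · exact .inr ⟨by simpa using hxy, hE, h⟩
  refine (Finset.card_le_card hsub).trans ((Finset.card_union_le _ _).trans ?_)
  have h1 := card_pairs_le G.edgeSet.toFinset
  have h2 := card_pairs_le (addableSet G).toFinset
  rw [← Set.ncard_eq_toFinset_card'] at h1 h2
  refine Nat.add_le_add ((Finset.card_union_le _ _).trans (Nat.add_le_add ?_ h1)) h2
  exact Finset.card_image_le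

end Addable

/-- If the number of edges exceeds `n` by a small proportion at most, then the number of addable
edges is larger than any prescribed multiple of `n`. -/
lemma many_addable (K : ℕ) : ∃ ε : ℝ, 0 < ε ∧ ∃ N : ℕ, ∀ n, N ≤ n → ∀ G : SimpleGraph (Fin n),
    IsPlanar G → (edgeCount G : ℝ) ≤ (1 + ε) * n → K * n ≤ (addableSet G).ncard := by
  set q := 2 * K + 5 with hq
  refine ⟨1 / (16 * q), by positivity, 18 * q * q, fun n hn G hG hM => ?_⟩
  -- the excess `e` over `n` is `⌊n / (16 q)⌋`
  have he : edgeCount G ≤ n + n / (16 * q) := by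
    have h1 : edgeCount G ≤ ⌊(1 + 1 / (16 * (q : ℝ))) * n⌋₊ := Nat.le_floor hM
    refine h1.trans ?_
    have h2 : (1 + 1 / (16 * (q : ℝ))) * n = (n : ℝ) / ((16 * q : ℕ) : ℝ) + n := by
      push_cast
      have : (q : ℝ) ≠ 0 := by rw [hq]; positivity
      field_simp
      ring
    rw [h2, Nat.floor_add_natCast (by positivity), Nat.floor_div_natCast, Nat.floor_natCast]
    omega
  have hpl := planarPairs_le G
  have hmain := planarPairs_large G hG (n / (16 * q)) q (by simpa using he)
  simp only [Fintype.card_fin] at hpl hmain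
  have hqp : 0 < q := by omega
  have hdiv : n / (16 * q) ≤ n := Nat.div_le_self _ _
  have hdiv2 : 16 * q * (n / (16 * q)) ≤ n := Nat.mul_div_le _ _
  suffices h : q * n ≤ (planarPairs G).card by
    have : q * n = 2 * (K * n) + 5 * n := by rw [hq]; ring
    omega
  rcases hmain with h | h
  · exact h
  · by_contra hcon
    push Not at hcon
    have hn0 : 0 < n := by
      have : 0 < 18 * q * q := by positivity
      omega
    set e := n / (16 * q)
    have h1 : (8 * e + 9 * q) * (planarPairs G).card < (8 * e + 9 * q) * (q * n) :=
      Nat.mul_lt_mul_of_pos_left hcon (by omega)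
    have h2 : (8 * e + 9 * q) * (q * n) ≤ n * n := by
      have : (8 * e + 9 * q) * q ≤ n := by nlinarith
      calc (8 * e + 9 * q) * (q * n) = ((8 * e + 9 * q) * q) * n := by ring
        _ ≤ n * n := Nat.mul_le_mul_right _ this
    omega

/-! ### Components under local changes, and double counting -/

lemma IsComponent.congr {V : Type*} {G G' : SimpleGraph V} {W : Finset V}
    (h : ∀ a ∈ W, ∀ b, G.Adj a b ↔ G'.Adj a b) (hG : IsComponent G W) : IsComponent G' W := by
  have e : G.induce (W : Set V) = G'.induce (W : Set V) := by
    ext a b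
    exact h a a.2 b
  exact ⟨e ▸ hG.1, fun v hv u hu => hG.2 v hv u ((h v hv u).2 hu)⟩

lemma IsOrderCopy.congr {h n : ℕ} {H : SimpleGraph (Fin h)} {G G' : SimpleGraph (Fin n)}
    {W : Finset (Fin n)} (h : ∀ a ∈ W, ∀ b, G.Adj a b ↔ G'.Adj a b) (hG : IsOrderCopy H G W) :
    IsOrderCopy H G' W := by
  obtain ⟨hW, hG⟩ := hG
  exact ⟨hW, fun i j => (hG i j).trans (h _ (W.orderIsoOfFin hW i).2 _)⟩

lemma IsComponent.mem_iff {V : Type*} {G : SimpleGraph V} {W : Finset V} (hW : IsComponent G W)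
    {u : V} (hu : u ∈ W) (x : V) : x ∈ W ↔ G.Reachable u x := by
  constructor
  · intro hx
    have := hW.1.preconnected ⟨u, hu⟩ ⟨x, hx⟩
    exact this.map (Embedding.induce (W : Set V)).toHom
  · rintro ⟨p⟩
    induction p with
    | nil => exact hu
    | cons h _ ih => exact ih (hW.2 _ hu _ h)

/-- Changing the edges at the vertices of `U` only creates at most `|U|` new components of a given
shape, because every new one meets `U`. -/
lemma numOrderComponents_le {h n : ℕ} (H : SimpleGraph (Fin h)) {G G' : SimpleGraph (Fin n)}
    (U : Finset (Fin n)) (hU : ∀ a, a ∉ U → ∀ b, G.Adj a b ↔ G'.Adj a b) :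
    numOrderComponents H G' ≤ numOrderComponents H G + U.card := by
  classical
  have hsub : {W : Finset (Fin n) | IsComponent G' W ∧ IsOrderCopy H G' W} ⊆
      {W : Finset (Fin n) | IsComponent G W ∧ IsOrderCopy H G W} ∪
      ((U.image fun u => Finset.univ.filter fun x => G'.Reachable u x : Finset _) :
        Set (Finset (Fin n))) := by
    rintro W ⟨h1, h2⟩
    by_cases hd : ∃ u ∈ U, u ∈ W
    · obtain ⟨u, hu, huW⟩ := hd
      refine .inr (Finset.mem_coe.2 (Finset.mem_image.2 ⟨u, hu, ?_⟩))
      ext x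
      simp [h1.mem_iff huW x]
    · push Not at hd
      have hc : ∀ a ∈ W, ∀ b, G'.Adj a b ↔ G.Adj a b :=
        fun a ha b => (hU a (fun h => hd a h ha) b).symm
      exact .inl ⟨h1.congr hc, h2.congr hc⟩
  refine (Set.ncard_le_ncard hsub (Set.toFinite _)).trans ((Set.ncard_union_le _ _).trans ?_)
  rw [Set.ncard_coe_finset]
  exact Nat.add_le_add_left Finset.card_image_le _

/-- If every `x ∈ S` has at least `a` ways `p ∈ P x` of producing an element `g x p` of `T`, and
the pair `(x, p)` can be reconstructed from `g x p` and one of at most `b` hints, then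
`|S| a ≤ |T| b`. -/
lemma double_count {α β γ δ : Type*} (S : Finset α) (T : Finset β) (a b : ℕ)
    (P : α → Finset γ) (g : α → γ → β) (Q : β → Finset δ) (k : β → δ → α × γ)
    (hP : ∀ x ∈ S, a ≤ (P x).card) (hg : ∀ x ∈ S, ∀ p ∈ P x, g x p ∈ T)
    (hQ : ∀ y ∈ T, (Q y).card ≤ b)
    (hk : ∀ x ∈ S, ∀ p ∈ P x, ∃ q ∈ Q (g x p), k (g x p) q = (x, p)) :
    S.card * a ≤ T.card * b := by
  classical
  have h1 : S.card * a ≤ (S.sigma P).card := by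
    rw [Finset.card_sigma, ← smul_eq_mul]
    exact Finset.card_nsmul_le_sum _ _ _ hP
  have h2 : (T.sigma Q).card ≤ T.card * b := by
    rw [Finset.card_sigma, ← smul_eq_mul]
    exact Finset.sum_le_card_nsmul _ _ _ hQ
  refine h1.trans (le_trans ?_ h2)
  have : S.sigma P ⊆ (T.sigma Q).image fun z => ⟨(k z.1 z.2).1, (k z.1 z.2).2⟩ := by
    rintro ⟨x, p⟩ hx
    obtain ⟨hx, hp⟩ := Finset.mem_sigma.1 hx
    obtain ⟨q, hq, e⟩ := hk x hx p hp
    refine Finset.mem_image.2 ⟨⟨g x p, q⟩, Finset.mem_sigma.2 ⟨hg x hx p hp, hq⟩, ?_⟩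
    simp only [e]
  exact (Finset.card_le_card this).trans Finset.card_image_le

open Classical in
/-- Pairs `(G, W)` of a planar graph `G` with `M` edges and at most `s` components that are
order-preserving copies of `H`, and a set `W` of `i` isolated vertices of `G`. -/
noncomputable def markedGraphs {h : ℕ} (H : SimpleGraph (Fin h)) (n i M s : ℕ) :
    Finset (SimpleGraph (Fin n) × Finset (Fin n)) :=
  Finset.univ.filter fun x => IsPlanar x.1 ∧ edgeCount x.1 = M ∧ numOrderComponents H x.1 ≤ s ∧
    x.2.card = i ∧ ∀ v ∈ x.2, ∀ t, ¬ x.1.Adj v t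

lemma mem_markedGraphs {h : ℕ} {H : SimpleGraph (Fin h)} {n i M s : ℕ}
    {x : SimpleGraph (Fin n) × Finset (Fin n)} :
    x ∈ markedGraphs H n i M s ↔ IsPlanar x.1 ∧ edgeCount x.1 = M ∧
      numOrderComponents H x.1 ≤ s ∧ x.2.card = i ∧ ∀ v ∈ x.2, ∀ t, ¬ x.1.Adj v t := by
  simp [markedGraphs]

lemma addMin_le {n m : ℕ} {G : SimpleGraph (Fin n)} (h1 : IsPlanar G) (h2 : edgeCount G = m) :
    addMin n m ≤ (addableSet G).ncard :=
  Nat.sInf_le ⟨G, ⟨h1, h2⟩, rfl⟩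

lemma edgeCount_add_edge {n : ℕ} {G : SimpleGraph (Fin n)} {e : Sym2 (Fin n)}
    (h1 : ¬ e.IsDiag) (h2 : e ∉ G.edgeSet) :
    edgeCount (G ⊔ fromEdgeSet {e}) = edgeCount G + 1 := by
  induction e with | _ x y =>
  exact edgeCount_sup_edge G (by simpa using h1) h2

lemma add_edge_del {n : ℕ} {G : SimpleGraph (Fin n)} {e : Sym2 (Fin n)} (h2 : e ∉ G.edgeSet) :
    (G ⊔ fromEdgeSet {e}).deleteEdges {e} = G := by
  ext a b
  simp only [deleteEdges_adj, sup_adj, fromEdgeSet_adj, Set.mem_singleton_iff]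
  constructor
  · tauto
  · intro h
    exact ⟨.inl h, fun he => h2 (he ▸ h)⟩

lemma edge_changes {n : ℕ} {G : SimpleGraph (Fin n)} (e : Sym2 (Fin n)) :
    ∀ a, a ∉ e.toFinset → ∀ b, G.Adj a b ↔ (G ⊔ fromEdgeSet {e}).Adj a b := by
  intro a ha b
  simp only [sup_adj, fromEdgeSet_adj, Set.mem_singleton_iff]
  constructor
  · exact .inl
  · rintro (h | ⟨rfl, _⟩)
    · exact h
    · exact absurd (by simp) ha

/-- Adding an addable edge. -/
lemma markedGraphs_add {h : ℕ} (H : SimpleGraph (Fin h)) (n m s : ℕ) :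
    (markedGraphs H n 0 m s).card * addMin n m ≤
      (markedGraphs H n 0 (m + 1) (s + 2)).card * (m + 1) := by
  classical
  refine double_count _ _ _ _ (fun x => (addableSet x.1).toFinset)
    (fun x e => (x.1 ⊔ fromEdgeSet {e}, x.2)) (fun y => y.1.edgeSet.toFinset)
    (fun y e => ((y.1.deleteEdges {e}, y.2), e)) ?_ ?_ ?_ ?_
  · intro x hx
    obtain ⟨h1, h2, -⟩ := mem_markedGraphs.1 hx
    rw [← Set.ncard_eq_toFinset_card']
    exact addMin_le h1 h2
  · rintro ⟨G, W⟩ hx e he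
    obtain ⟨h1, h2, h3, h4, -⟩ := mem_markedGraphs.1 hx
    obtain ⟨g1, g2, g3⟩ := Set.mem_toFinset.1 he
    refine mem_markedGraphs.2 ⟨g3, ?_, ?_, h4, ?_⟩
    · rw [← h2]; exact edgeCount_add_edge g1 g2
    · refine (numOrderComponents_le H e.toFinset (edge_changes e)).trans ?_
      exact Nat.add_le_add h3 (by rw [Sym2.card_toFinset]; split_ifs; all_goals omega)
    · simp only at h4 ⊢
      rw [Finset.card_eq_zero.1 h4]; simp
  · intro y hy
    obtain ⟨-, h2, -⟩ := mem_markedGraphs.1 hy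
    rw [← Set.ncard_eq_toFinset_card']
    exact h2.le
  · rintro ⟨G, W⟩ hx e he
    obtain ⟨g1, g2, g3⟩ := Set.mem_toFinset.1 he
    refine ⟨e, ?_, ?_⟩
    · refine (@Set.mem_toFinset _ _ (_) _).2 ?_
      have : fromEdgeSet {e} ≤ G ⊔ fromEdgeSet {e} := le_sup_right
      exact edgeSet_mono this (by simpa using g1)
    · simp only [add_edge_del g2]

lemma acyclic_map {V V' : Type*} [Nonempty V] (H : SimpleGraph V) (hH : H.IsAcyclic)
    (f : V ↪ V') : (H.map f).IsAcyclic := by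
  rw [isAcyclic_iff_forall_adj_isBridge]
  intro a b hab
  obtain ⟨i, j, hij, rfl, rfl⟩ := (map_adj f H a b).1 hab
  have hbr := isBridge_iff.1 (isAcyclic_iff_forall_adj_isBridge.1 hH hij)
  rw [isBridge_iff]
  intro hr
  apply hbr
  have hinv : ∀ x, Function.invFun f (f x) = x := Function.leftInverse_invFun f.injective
  let ψ : (H.map f).deleteEdges {s(f i, f j)} →g H.deleteEdges {s(i, j)} :=
    { toFun := Function.invFun f
      map_rel' := by
        intro a b h
        rw [deleteEdges_adj] at h
        obtain ⟨h, hne⟩ := h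
        obtain ⟨k, l, hkl, rfl, rfl⟩ := (map_adj f H a b).1 h
        rw [hinv, hinv, deleteEdges_adj]
        refine ⟨hkl, fun e => hne ?_⟩
        have := congrArg (Sym2.map f) e
        simpa using this }
  have := hr.map ψ
  simpa [ψ, hinv] using this

/-- Placing a copy of the tree `H` on the marked isolated vertices. The result determines the
original pair once it is known which component was placed. -/
lemma markedGraphs_plant {h : ℕ} (H : SimpleGraph (Fin h)) (hH : H.IsTree) (n M s : ℕ) :
    (markedGraphs H n h M s).card ≤
      (markedGraphs H n 0 (M + (h - 1)) (s + h)).card * (s + h) := by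
  classical
  have hne : Nonempty (Fin h) := hH.connected.nonempty
  have hedge : H.edgeSet.ncard = h - 1 := by
    have := hH.card_edgeFinset
    rw [Fintype.card_fin, edgeFinset, ← Set.ncard_eq_toFinset_card'] at this
    omega
  let φ : (W : Finset (Fin n)) → W.card = h → Fin h ↪ Fin n :=
    fun W hW => (W.orderEmbOfFin hW).toEmbedding
  let F : Finset (Fin n) → SimpleGraph (Fin n) :=
    fun W => if hW : W.card = h then H.map (φ W hW) else ⊥
  have hF : ∀ W (hW : W.card = h), F W = H.map (φ W hW) := fun W hW => dif_pos hW
  have hFW : ∀ W a b, (F W).Adj a b → a ∈ W := by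
    intro W a b hab
    by_cases hW : W.card = h
    · rw [hF W hW] at hab
      obtain ⟨i, j, _, rfl, rfl⟩ := (map_adj _ H a b).1 hab
      exact Finset.orderEmbOfFin_mem W hW i
    · simp only [F, hW, dif_neg, not_false_eq_true, bot_adj] at hab
  rw [← mul_one (markedGraphs H n h M s).card]
  refine double_count _ _ _ _ (fun _ => ({()} : Finset Unit))
    (fun x _ => (x.1 ⊔ F x.2, ∅))
    (fun y => {W : Finset (Fin n) | IsComponent y.1 W ∧ IsOrderCopy H y.1 W}.toFinset)
    (fun y W => ((restr y.1 (W : Set (Fin n))ᶜ, W), ())) ?_ ?_ ?_ ?_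
  · intro x _; simp
  · rintro ⟨G, W⟩ hx _ _
    obtain ⟨h1, h2, h3, h4, h5⟩ := mem_markedGraphs.1 hx
    simp only at h1 h2 h3 h4 h5
    have hGW : ∀ a b, G.Adj a b → a ∉ (W : Set (Fin n)) := fun a b hab ha => h5 a ha b hab
    have hFe : (F W).edgeSet.ncard = h - 1 := by
      rw [hF W h4, SimpleGraph.edgeSet_map, Set.ncard_image_of_injective _
        (Function.Embedding.injective _), hedge]
    refine mem_markedGraphs.2 ⟨?_, ?_, ?_, by simp, by simp⟩
    · refine planar_sup_forest (W : Set (Fin n)) hGW h1 _ (F W) rfl ?_ (fun a b => hFW W a b)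
      rw [hF W h4]
      exact acyclic_map H hH.isAcyclic _
    · change (G ⊔ F W).edgeSet.ncard = _
      rw [edgeSet_sup, Set.ncard_union_eq, hFe]
      · change edgeCount G + _ = _
        rw [h2]
      · rw [Set.disjoint_left]
        intro e
        induction e with | _ a b =>
        exact fun ha hb => hGW a b ha (hFW W a b hb)
    · have := numOrderComponents_le H (G := G) (G' := G ⊔ F W) W (fun a ha b => by
        rw [sup_adj]
        exact ⟨.inl, fun h => h.elim id fun h => absurd (hFW W a b h) ha⟩)
      simp only
      omega
  · intro y hy
    rw [← Set.ncard_eq_toFinset_card']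
    exact (mem_markedGraphs.1 hy).2.2.1
  · rintro ⟨G, W⟩ hx _ _
    obtain ⟨h1, h2, h3, h4, h5⟩ := mem_markedGraphs.1 hx
    simp only at h1 h2 h3 h4 h5
    refine ⟨W, ?_, ?_⟩
    · rw [Set.mem_toFinset]
      have hadj : ∀ i j : Fin h, H.Adj i j ↔ (G ⊔ F W).Adj
          ((W.orderIsoOfFin h4 i : Fin n)) ((W.orderIsoOfFin h4 j : Fin n)) := by
        intro i j
        rw [sup_adj, hF W h4]
        have e : ∀ i, ((W.orderIsoOfFin h4 i : Fin n)) = φ W h4 i := fun i => rfl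
        rw [e, e, map_adj_apply]
        refine ⟨.inr, fun h => h.elim (fun h => absurd h (h5 _ ?_ _)) id⟩
        exact Finset.orderEmbOfFin_mem W h4 i
      refine ⟨⟨?_, ?_⟩, h4, hadj⟩
      · let iso : H ≃g (G ⊔ F W).induce (W : Set (Fin n)) :=
          { toEquiv := (W.orderIsoOfFin h4).toEquiv
            map_rel_iff' := fun {i j} => (hadj i j).symm }
        exact iso.connected_iff.1 hH.connected
      · rintro v hv u (hu | hu)
        · exact absurd hu (h5 v hv u)
        · exact hFW W u v hu.symm
    · have : restr (G ⊔ F W) (W : Set (Fin n))ᶜ = G := by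
        ext a b
        simp only [restr_adj, sup_adj, Set.mem_compl_iff, Finset.mem_coe]
        constructor
        · rintro ⟨hab | hab, ha, _⟩
          · exact hab
          · exact absurd (hFW W a b hab) ha
        · exact fun hab => ⟨.inl hab, fun ha => h5 a ha b hab, fun hb => h5 b hb a hab.symm⟩
      simp only [this]

/-! ### Isolating one more vertex -/

section Isolate
variable {n : ℕ}

/-- The edges of a graph, as a finset. -/
noncomputable def edgesOf (G : SimpleGraph (Fin n)) : Finset (Sym2 (Fin n)) :=
  (Set.toFinite G.edgeSet).toFinset

lemma mem_edgesOf {G : SimpleGraph (Fin n)} {e : Sym2 (Fin n)} : e ∈ edgesOf G ↔ e ∈ G.edgeSet :=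
  Set.Finite.mem_toFinset _

lemma card_edgesOf (G : SimpleGraph (Fin n)) : (edgesOf G).card = edgeCount G :=
  (Set.ncard_eq_toFinset_card _ _).symm

/-- `G` together with the edges from `v` to the members of `e`. -/
def attach (G : SimpleGraph (Fin n)) (v : Fin n) (e : Sym2 (Fin n)) : SimpleGraph (Fin n) where
  Adj a b := G.Adj a b ∨ a ≠ b ∧ (a = v ∧ b ∈ e ∨ b = v ∧ a ∈ e)
  symm := ⟨fun _ _ h => h.elim (fun h => .inl h.symm) fun h => .inr ⟨h.1.symm, h.2.symm⟩⟩
  loopless := ⟨fun a h => h.elim (fun h => G.loopless.irrefl a h) fun h => h.1 rfl⟩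

lemma attach_restr {G : SimpleGraph (Fin n)} {v : Fin n} {e : Sym2 (Fin n)}
    (hN : ∀ t, G.Adj v t ↔ t ∈ e) : attach (restr G {v}ᶜ) v e = G := by
  ext a b
  simp only [attach, restr_adj, Set.mem_compl_iff, Set.mem_singleton_iff]
  constructor
  · rintro (⟨h, _⟩ | ⟨_, ⟨rfl, h⟩ | ⟨rfl, h⟩⟩)
    · exact h
    · exact (hN b).2 h
    · exact ((hN a).2 h).symm
  · intro h
    by_cases ha : a = v
    · subst ha; exact .inr ⟨h.ne, .inl ⟨rfl, (hN b).1 h⟩⟩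
    by_cases hb : b = v
    · subst hb; exact .inr ⟨h.ne, .inr ⟨rfl, (hN a).1 h.symm⟩⟩
    exact .inl ⟨h, ha, hb⟩

lemma restr_changes {G : SimpleGraph (Fin n)} {v : Fin n} {e : Sym2 (Fin n)}
    (hN : ∀ t, G.Adj v t ↔ t ∈ e) :
    ∀ a, a ∉ insert v e.toFinset → ∀ b, G.Adj a b ↔ (restr G {v}ᶜ).Adj a b := by
  intro a ha b
  simp only [Finset.mem_insert, Sym2.mem_toFinset, not_or] at ha
  simp only [restr_adj, Set.mem_compl_iff, Set.mem_singleton_iff]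
  refine ⟨fun h => ⟨h, ha.1, ?_⟩, fun h => h.1⟩
  rintro rfl
  exact ha.2 ((hN a).1 h.symm)

lemma edgeCount_restr_compl (G : SimpleGraph (Fin n)) (v : Fin n) :
    edgeCount G = edgeCount (restr G {v}ᶜ) + vertexDegree G v := by
  have h : G.edgeSet = (restr G {v}ᶜ).edgeSet ∪ (fun t => s(v, t)) '' G.neighborSet v := by
    ext e
    induction e with | _ a b =>
    simp only [mem_edgeSet, Set.mem_union, restr_adj, Set.mem_compl_iff, Set.mem_singleton_iff,
      Set.mem_image, mem_neighborSet, Sym2.eq_iff]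
    constructor
    · intro h
      by_cases ha : a = v
      · subst ha; exact .inr ⟨b, h, .inl ⟨rfl, rfl⟩⟩
      by_cases hb : b = v
      · subst hb; exact .inr ⟨a, h.symm, .inr ⟨rfl, rfl⟩⟩
      exact .inl ⟨h, ha, hb⟩
    · rintro (⟨h, _⟩ | ⟨t, h, ⟨rfl, rfl⟩ | ⟨rfl, rfl⟩⟩)
      · exact h
      · exact h
      · exact h.symm
  rw [edgeCount, h, Set.ncard_union_eq, Set.ncard_image_of_injective]
  · rfl
  · intro a b hab
    rcases (by simpa using hab : a = b ∨ v = b ∧ a = v) with h | ⟨h1, h2⟩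
    · exact h
    · exact h2.trans h1
  · rw [Set.disjoint_left]
    rintro e he ⟨t, _, rfl⟩
    exact he.2.1 rfl

lemma vertexDegree_of_mem {G : SimpleGraph (Fin n)} {v : Fin n} {e : Sym2 (Fin n)}
    (hN : ∀ t, G.Adj v t ↔ t ∈ e) : vertexDegree G v = e.toFinset.card := by
  rw [vertexDegree, ← Set.ncard_coe_finset]
  congr 1
  ext t
  simp [hN]

lemma card_sym2_le_two (e : Sym2 (Fin n)) : e.toFinset.card ≤ 2 := by
  rw [Sym2.card_toFinset]; split_ifs; all_goals omega

open Classical in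
/-- The vertices outside `W` that are isolated in `G`. -/
noncomputable def isoV (x : SimpleGraph (Fin n) × Finset (Fin n)) : Finset (Fin n) :=
  Finset.univ.filter fun v => v ∉ x.2 ∧ ∀ t, ¬ x.1.Adj v t

open Classical in
/-- Vertices `v` of degree one, with the loop `s(u, u)` at the neighbour `u` of `v`. -/
noncomputable def leafV (x : SimpleGraph (Fin n) × Finset (Fin n)) :
    Finset (Fin n × Sym2 (Fin n)) :=
  Finset.univ.filter fun p => p.2.IsDiag ∧ ∀ t, x.1.Adj p.1 t ↔ t ∈ p.2

open Classical in
/-- Vertices of degree two with nonadjacent neighbours, and the pair of neighbours. -/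
noncomputable def openV (x : SimpleGraph (Fin n) × Finset (Fin n)) :
    Finset (Fin n × Sym2 (Fin n)) :=
  Finset.univ.filter fun p => ¬ p.2.IsDiag ∧ p.2 ∉ x.1.edgeSet ∧ ∀ t, x.1.Adj p.1 t ↔ t ∈ p.2

open Classical in
/-- Vertices of degree two with adjacent neighbours, and the pair of neighbours. -/
noncomputable def triV (x : SimpleGraph (Fin n) × Finset (Fin n)) :
    Finset (Fin n × Sym2 (Fin n)) :=
  Finset.univ.filter fun p => p.2 ∈ x.1.edgeSet ∧ ∀ t, x.1.Adj p.1 t ↔ t ∈ p.2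

/-- A graph whose average degree is well below three has many vertices of degree at most two. -/
lemma exists_many_low (x : SimpleGraph (Fin n) × Finset (Fin n)) (d : ℕ)
    (hd : 2 * edgeCount x.1 + 12 * d + 3 * x.2.card < 3 * n) :
    d ≤ (isoV x).card ∨ d ≤ (leafV x).card ∨ d ≤ (openV x).card ∨ d ≤ (triV x).card := by
  classical
  by_contra hcon
  push Not at hcon
  obtain ⟨c1, c2, c3, c4⟩ := hcon
  set B : Finset (Fin n) := Finset.univ.filter fun v => 3 ≤ vertexDegree x.1 v with hB
  have hcov : (Finset.univ : Finset (Fin n)) ⊆ x.2 ∪ isoV x ∪ (leafV x).image Prod.fst ∪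
      (openV x).image Prod.fst ∪ (triV x).image Prod.fst ∪ B := by
    intro v _
    simp only [Finset.mem_union, Finset.mem_image]
    by_cases h3 : 3 ≤ vertexDegree x.1 v
    · exact .inr (Finset.mem_filter.2 ⟨Finset.mem_univ _, h3⟩)
    left
    have key : ∀ t, x.1.Adj v t ↔ t ∈ x.1.neighborSet v := fun t => Iff.rfl
    have h012 : vertexDegree x.1 v = 0 ∨ vertexDegree x.1 v = 1 ∨ vertexDegree x.1 v = 2 := by
      omega
    rcases h012 with h | h | h
    · rw [vertexDegree, Set.ncard_eq_zero] at h
      simp only [h, Set.mem_empty_iff_false, iff_false] at key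
      by_cases hv : v ∈ x.2
      · exact .inl (.inl (.inl (.inl hv)))
      · exact .inl (.inl (.inl (.inr (Finset.mem_filter.2 ⟨Finset.mem_univ _, hv, key⟩))))
    · obtain ⟨u, hu⟩ := Set.ncard_eq_one.1 h
      refine .inl (.inl (.inr ⟨(v, s(u, u)), Finset.mem_filter.2 ⟨Finset.mem_univ _, ?_, ?_⟩,
        rfl⟩))
      · simp
      · intro t; rw [key, hu]; simp
    · obtain ⟨u, w, huw, hu⟩ := Set.ncard_eq_two.1 h
      have key : ∀ t, x.1.Adj v t ↔ t ∈ s(u, w) := by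
        intro t; rw [key, hu]; simp
      by_cases hE : s(u, w) ∈ x.1.edgeSet
      · exact .inr ⟨(v, s(u, w)), Finset.mem_filter.2 ⟨Finset.mem_univ _, hE, key⟩, rfl⟩
      · exact .inl (.inr ⟨(v, s(u, w)), Finset.mem_filter.2
          ⟨Finset.mem_univ _, by simpa using huw, hE, key⟩, rfl⟩)
  have h1 := Finset.card_le_card hcov
  rw [Finset.card_univ, Fintype.card_fin] at h1
  have g1 := Finset.card_union_le (x.2 ∪ isoV x ∪ (leafV x).image Prod.fst ∪
      (openV x).image Prod.fst ∪ (triV x).image Prod.fst) B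
  have g2 := Finset.card_union_le (x.2 ∪ isoV x ∪ (leafV x).image Prod.fst ∪
      (openV x).image Prod.fst) ((triV x).image Prod.fst)
  have g3 := Finset.card_union_le (x.2 ∪ isoV x ∪ (leafV x).image Prod.fst)
    ((openV x).image Prod.fst)
  have g4 := Finset.card_union_le (x.2 ∪ isoV x) ((leafV x).image Prod.fst)
  have g5 := Finset.card_union_le x.2 (isoV x)
  have k1 := Finset.card_image_le (s := leafV x) (f := Prod.fst)
  have k2 := Finset.card_image_le (s := openV x) (f := Prod.fst)
  have k3 := Finset.card_image_le (s := triV x) (f := Prod.fst)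
  have hdeg : B.card * 3 ≤ 2 * edgeCount x.1 := by
    rw [← sum_vertexDegree, ← smul_eq_mul]
    refine (Finset.card_nsmul_le_sum B (vertexDegree x.1) 3
      fun v hv => (Finset.mem_filter.1 hv).2).trans ?_
    exact Finset.sum_le_sum_of_subset (Finset.subset_univ _)
  omega

variable {h : ℕ} {H : SimpleGraph (Fin h)} {i M s : ℕ}

lemma not_mem_marked {x : SimpleGraph (Fin n) × Finset (Fin n)} {v : Fin n} {e : Sym2 (Fin n)}
    (hx : x ∈ markedGraphs H n i M s) (hN : ∀ t, x.1.Adj v t ↔ t ∈ e) : v ∉ x.2 := by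
  intro hv
  induction e with | _ a b =>
  exact (mem_markedGraphs.1 hx).2.2.2.2 v hv a ((hN a).2 (by simp))

/-- The common part of the four constructions below: `G'` has one edge less than `G`, differs from
it at few vertices only, and has the additional isolated vertex `v`. -/
lemma mem_marked_succ {G G' : SimpleGraph (Fin n)} {W : Finset (Fin n)} {v : Fin n}
    (hx : (G, W) ∈ markedGraphs H n i (M + 1) s) (hv : v ∉ W) (hp : IsPlanar G')
    (he : edgeCount G' = M) (U : Finset (Fin n)) (hU : U.card ≤ 5)
    (hUG : ∀ a, a ∉ U → ∀ b, G.Adj a b ↔ G'.Adj a b)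
    (hiso : ∀ a ∈ insert v W, ∀ t, ¬ G'.Adj a t) :
    (G', insert v W) ∈ markedGraphs H n (i + 1) M (s + 5) := by
  obtain ⟨h1, h2, h3, h4, h5⟩ := mem_markedGraphs.1 hx
  have := numOrderComponents_le H U hUG
  simp only at h1 h2 h3 h4 h5
  refine mem_markedGraphs.2 ⟨hp, he, ?_, ?_, hiso⟩
  · simp only; omega
  · rw [Finset.card_insert_of_notMem hv, h4]

/-- An isolated vertex is marked and an arbitrary edge is deleted. -/
lemma isolate_iso (S : Finset (SimpleGraph (Fin n) × Finset (Fin n)))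
    (hS : S ⊆ markedGraphs H n i (M + 1) s) (d : ℕ) (hd : ∀ x ∈ S, d ≤ (isoV x).card) :
    S.card * (d * (M + 1)) ≤
      (markedGraphs H n (i + 1) M (s + 5)).card * ((i + 1) * (n * n)) := by
  classical
  refine double_count _ _ _ _ (fun x => isoV x ×ˢ edgesOf x.1)
    (fun x p => (x.1.deleteEdges {p.2}, insert p.1 x.2))
    (fun y => y.2 ×ˢ (Finset.univ : Finset (Fin n × Fin n)).image fun z => s(z.1, z.2))
    (fun y q => ((y.1 ⊔ fromEdgeSet {q.2}, y.2.erase q.1), q)) ?_ ?_ ?_ ?_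
  · intro x hx
    rw [Finset.card_product, card_edgesOf, (mem_markedGraphs.1 (hS hx)).2.1]
    exact Nat.mul_le_mul_right _ (hd x hx)
  · rintro ⟨G, W⟩ hx ⟨v, f⟩ hp
    obtain ⟨hv, hf⟩ := Finset.mem_product.1 hp
    obtain ⟨hvW, hv⟩ := (Finset.mem_filter.1 hv).2
    rw [mem_edgesOf] at hf
    have hx := hS hx
    obtain ⟨h1, h2, -, -, h5⟩ := mem_markedGraphs.1 hx
    simp only at hf hv hvW h1 h2 h5 ⊢
    refine mem_marked_succ hx hvW (planar_mono (deleteEdges_le _) h1) ?_ f.toFinset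
      ((card_sym2_le_two f).trans (by omega)) ?_ ?_
    · have : (G.deleteEdges {f}).edgeSet.ncard + 1 = G.edgeSet.ncard := by
        rw [edgeSet_deleteEdges]
        exact Set.ncard_sdiff_singleton_add_one hf (Set.toFinite _)
      change _ = M + 1 at h2
      rw [edgeCount] at h2 ⊢
      omega
    · intro a ha b
      rw [deleteEdges_adj, Set.mem_singleton_iff]
      refine ⟨fun h => ⟨h, ?_⟩, fun h => h.1⟩
      rintro rfl
      exact ha (by simp)
    · intro a ha t hat
      have hat := deleteEdges_le _ hat
      rcases Finset.mem_insert.1 ha with rfl | ha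
      · exact hv t hat
      · exact h5 a ha t hat
  · intro y hy
    rw [Finset.card_product, (mem_markedGraphs.1 hy).2.2.2.1]
    refine Nat.mul_le_mul_left _ (Finset.card_image_le.trans (le_of_eq ?_))
    simp
  · rintro ⟨G, W⟩ hx ⟨v, f⟩ hp
    obtain ⟨hv, hf⟩ := Finset.mem_product.1 hp
    obtain ⟨hvW, hv⟩ := (Finset.mem_filter.1 hv).2
    rw [mem_edgesOf] at hf
    simp only at hf hv hvW
    refine ⟨(v, f), ?_, ?_⟩
    · refine Finset.mem_product.2 ⟨Finset.mem_insert_self _ _, ?_⟩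
      induction f with | _ a b =>
      exact Finset.mem_image.2 ⟨(a, b), Finset.mem_univ _, rfl⟩
    · have : G.deleteEdges {f} ⊔ fromEdgeSet {f} = G := by
        ext a b
        simp only [sup_adj, deleteEdges_adj, fromEdgeSet_adj, Set.mem_singleton_iff]
        constructor
        · rintro (h | ⟨rfl, _⟩)
          · exact h.1
          · exact hf
        · intro h
          by_cases e : s(a, b) = f
          · exact .inr ⟨e, h.ne⟩
          · exact .inl ⟨h, e⟩
      simp only [this, Finset.erase_insert hvW]

/-- The edge at a vertex of degree one is deleted. -/
lemma isolate_leaf (S : Finset (SimpleGraph (Fin n) × Finset (Fin n)))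
    (hS : S ⊆ markedGraphs H n i (M + 1) s) (d : ℕ) (hd : ∀ x ∈ S, d ≤ (leafV x).card) :
    S.card * d ≤ (markedGraphs H n (i + 1) M (s + 5)).card * ((i + 1) * n) := by
  classical
  refine double_count _ _ _ _ leafV
    (fun x p => (restr x.1 {p.1}ᶜ, insert p.1 x.2))
    (fun y => y.2 ×ˢ (Finset.univ : Finset (Fin n)).image fun u => s(u, u))
    (fun y q => ((attach y.1 q.1 q.2, y.2.erase q.1), q)) hd ?_ ?_ ?_
  · rintro ⟨G, W⟩ hx ⟨v, e⟩ hp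
    obtain ⟨hdiag, hN⟩ := (Finset.mem_filter.1 hp).2
    have hx := hS hx
    have hvW := not_mem_marked hx hN
    obtain ⟨h1, h2, -, -, h5⟩ := mem_markedGraphs.1 hx
    simp only at hdiag hN hvW h1 h2 h5 ⊢
    refine mem_marked_succ hx hvW (planar_mono (restr_le _ _) h1) ?_ (insert v e.toFinset) ?_
      (restr_changes hN) ?_
    · have g1 := edgeCount_restr_compl G v
      have g2 := vertexDegree_of_mem hN
      rw [Sym2.card_toFinset, if_pos hdiag] at g2
      omega
    · have := Finset.card_insert_le v e.toFinset
      have := card_sym2_le_two e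
      omega
    · intro a ha t hat
      rcases Finset.mem_insert.1 ha with rfl | ha
      · exact hat.2.1 rfl
      · exact h5 a ha t hat.1
  · intro y hy
    rw [Finset.card_product, (mem_markedGraphs.1 hy).2.2.2.1]
    refine Nat.mul_le_mul_left _ (Finset.card_image_le.trans (le_of_eq ?_))
    simp
  · rintro ⟨G, W⟩ hx ⟨v, e⟩ hp
    obtain ⟨hdiag, hN⟩ := (Finset.mem_filter.1 hp).2
    have hvW := not_mem_marked (hS hx) hN
    simp only at hdiag hN hvW
    refine ⟨(v, e), ?_, ?_⟩
    · refine Finset.mem_product.2 ⟨Finset.mem_insert_self _ _, ?_⟩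
      induction e with | _ a b =>
      obtain rfl : a = b := by simpa using hdiag
      exact Finset.mem_image.2 ⟨a, Finset.mem_univ _, rfl⟩
    · simp only [attach_restr hN, Finset.erase_insert hvW]

/-- A vertex of degree two with nonadjacent neighbours is suppressed. -/
lemma isolate_open (S : Finset (SimpleGraph (Fin n) × Finset (Fin n)))
    (hS : S ⊆ markedGraphs H n i (M + 1) s) (d : ℕ) (hd : ∀ x ∈ S, d ≤ (openV x).card) :
    S.card * d ≤ (markedGraphs H n (i + 1) M (s + 5)).card * ((i + 1) * M) := by
  classical
  refine double_count _ _ _ _ openV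
    (fun x p => (restr x.1 {p.1}ᶜ ⊔ fromEdgeSet {p.2}, insert p.1 x.2))
    (fun y => y.2 ×ˢ edgesOf y.1)
    (fun y q => ((attach (y.1.deleteEdges {q.2}) q.1 q.2, y.2.erase q.1), q)) hd ?_ ?_ ?_
  · rintro ⟨G, W⟩ hx ⟨v, e⟩ hp
    obtain ⟨hdiag, hE, hN⟩ := (Finset.mem_filter.1 hp).2
    have hx := hS hx
    have hvW := not_mem_marked hx hN
    obtain ⟨h1, h2, -, -, h5⟩ := mem_markedGraphs.1 hx
    simp only at hdiag hE hN hvW h1 h2 h5 ⊢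
    have hve : v ∉ e := fun h => G.loopless.irrefl v ((hN v).2 h)
    have hE' : e ∉ (restr G {v}ᶜ).edgeSet := fun h => hE (edgeSet_mono (restr_le _ _) h)
    have hiso : ∀ t, ¬ (restr G {v}ᶜ ⊔ fromEdgeSet {e}).Adj v t := by
      rintro t (h | h)
      · exact h.2.1 rfl
      · rw [fromEdgeSet_adj, Set.mem_singleton_iff] at h
        exact hve (by rw [← h.1]; simp)
    refine mem_marked_succ hx hvW ?_ ?_ (insert v e.toFinset) ?_ ?_ ?_
    · induction e with | _ u w =>
      refine planar_contract (v := v) (u := u) (w := w) hiso ((hN u).2 (by simp))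
        ((hN w).2 (by simp)) (fun a b hab => ?_) h1
      rcases sup_edge_cases hab with h | h
      · exact .inl h.1
      · exact .inr h
    · have g1 := edgeCount_restr_compl G v
      have g2 := vertexDegree_of_mem hN
      rw [Sym2.card_toFinset, if_neg hdiag] at g2
      rw [edgeCount_add_edge hdiag hE']
      omega
    · have := Finset.card_insert_le v e.toFinset
      have := card_sym2_le_two e
      omega
    · intro a ha b
      rw [restr_changes hN a ha b]
      exact edge_changes e a (fun h => ha (Finset.mem_insert_of_mem h)) b
    · intro a ha t hat
      rcases Finset.mem_insert.1 ha with rfl | ha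
      · exact hiso t hat
      · rcases hat with hat | hat
        · exact h5 a ha t hat.1
        · rw [fromEdgeSet_adj, Set.mem_singleton_iff] at hat
          exact h5 a ha v ((hN a).2 (by rw [← hat.1]; simp)).symm
  · intro y hy
    rw [Finset.card_product, (mem_markedGraphs.1 hy).2.2.2.1, card_edgesOf,
      (mem_markedGraphs.1 hy).2.1]
  · rintro ⟨G, W⟩ hx ⟨v, e⟩ hp
    obtain ⟨hdiag, hE, hN⟩ := (Finset.mem_filter.1 hp).2
    have hvW := not_mem_marked (hS hx) hN
    simp only at hdiag hE hN hvW
    have hE' : e ∉ (restr G {v}ᶜ).edgeSet := fun h => hE (edgeSet_mono (restr_le _ _) h)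
    refine ⟨(v, e), ?_, ?_⟩
    · refine Finset.mem_product.2 ⟨Finset.mem_insert_self _ _, mem_edgesOf.2 ?_⟩
      have : fromEdgeSet {e} ≤ restr G {v}ᶜ ⊔ fromEdgeSet {e} := le_sup_right
      exact edgeSet_mono this (by simpa using hdiag)
    · simp only [add_edge_del hE', attach_restr hN, Finset.erase_insert hvW]

open Classical in
/-- The addable edges of `G - v` avoiding `v` and `W`. -/
noncomputable def freeEdges (G : SimpleGraph (Fin n)) (W : Finset (Fin n)) (v : Fin n) :
    Finset (Sym2 (Fin n)) :=
  Finset.univ.filter fun g => g ∈ addableSet (restr G {v}ᶜ) ∧ ∀ a ∈ insert v W, a ∉ g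

lemma card_freeEdges (G : SimpleGraph (Fin n)) (W : Finset (Fin n)) (v : Fin n) (K : ℕ)
    (hK : (W.card + 1 + K) * n ≤ (addableSet (restr G {v}ᶜ)).ncard) :
    K * n ≤ (freeEdges G W v).card := by
  classical
  have hsub : (Set.toFinite (addableSet (restr G {v}ᶜ))).toFinset ⊆ freeEdges G W v ∪
      (insert v W ×ˢ (Finset.univ : Finset (Fin n))).image fun z => s(z.1, z.2) := by
    intro g hg
    rw [Set.Finite.mem_toFinset] at hg
    by_cases h : ∀ a ∈ insert v W, a ∉ g
    · exact Finset.mem_union_left _ (Finset.mem_filter.2 ⟨Finset.mem_univ _, hg, h⟩)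
    · push Not at h
      obtain ⟨a, ha, hag⟩ := h
      obtain ⟨b, rfl⟩ := Sym2.mem_iff_exists.1 hag
      exact Finset.mem_union_right _ (Finset.mem_image.2 ⟨(a, b), by simpa using ha, rfl⟩)
  have h1 := Finset.card_le_card hsub
  rw [← Set.ncard_eq_toFinset_card] at h1
  have h2 := Finset.card_union_le (freeEdges G W v)
    ((insert v W ×ˢ (Finset.univ : Finset (Fin n))).image fun z => s(z.1, z.2))
  have h3 : ((insert v W ×ˢ (Finset.univ : Finset (Fin n))).image fun z => s(z.1, z.2)).card
      ≤ (W.card + 1) * n := by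
    refine Finset.card_image_le.trans ?_
    rw [Finset.card_product, Finset.card_univ, Fintype.card_fin]
    exact Nat.mul_le_mul_right _ (Finset.card_insert_le _ _)
  rw [add_mul] at hK
  omega

/-- A vertex of degree two with adjacent neighbours is isolated, and the lost edge is made up for by
an addable one. -/
lemma isolate_tri (S : Finset (SimpleGraph (Fin n) × Finset (Fin n)))
    (hS : S ⊆ markedGraphs H n i (M + 1) s) (d : ℕ) (hd : ∀ x ∈ S, d ≤ (triV x).card)
    (hadd : ∀ G : SimpleGraph (Fin n), IsPlanar G → edgeCount G ≤ M →
      (i + 1 + 1) * n ≤ (addableSet G).ncard) :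
    S.card * (d * n) ≤ (markedGraphs H n (i + 1) M (s + 5)).card * ((i + 1) * (M * M)) := by
  classical
  refine double_count _ _ _ _ (fun x => (triV x).sigma fun p => freeEdges x.1 x.2 p.1)
    (fun x p => (restr x.1 {p.1.1}ᶜ ⊔ fromEdgeSet {p.2}, insert p.1.1 x.2))
    (fun y => y.2 ×ˢ (edgesOf y.1 ×ˢ edgesOf y.1))
    (fun y q => ((attach (y.1.deleteEdges {q.2.2}) q.1 q.2.1, y.2.erase q.1),
      ⟨(q.1, q.2.1), q.2.2⟩)) ?_ ?_ ?_ ?_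
  · rintro ⟨G, W⟩ hx
    have hx' := hS hx
    obtain ⟨h1, h2, -, h4, h5⟩ := mem_markedGraphs.1 hx'
    simp only at h1 h2 h4 h5
    rw [Finset.card_sigma]
    refine (Nat.mul_le_mul_right n (hd _ hx)).trans ?_
    rw [← smul_eq_mul]
    refine Finset.card_nsmul_le_sum _ _ _ ?_
    rintro ⟨v, e⟩ hp
    obtain ⟨hE, hN⟩ := (Finset.mem_filter.1 hp).2
    simp only at hE hN
    refine (le_of_eq (one_mul n).symm).trans (card_freeEdges G W v 1 ?_)
    rw [h4]
    refine hadd _ (planar_mono (restr_le _ _) h1) ?_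
    have g1 := edgeCount_restr_compl G v
    have g2 := vertexDegree_of_mem hN
    rw [Sym2.card_toFinset, if_neg (G.not_isDiag_of_mem_edgeSet hE)] at g2
    omega
  · rintro ⟨G, W⟩ hx ⟨⟨v, e⟩, g⟩ hp
    obtain ⟨hp, hg⟩ := Finset.mem_sigma.1 hp
    obtain ⟨hE, hN⟩ := (Finset.mem_filter.1 hp).2
    obtain ⟨⟨hgd, hgE, hgp⟩, hgW⟩ := (Finset.mem_filter.1 hg).2
    have hx := hS hx
    have hvW := not_mem_marked hx hN
    obtain ⟨h1, h2, -, -, h5⟩ := mem_markedGraphs.1 hx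
    simp only at hE hN hvW h1 h2 h5 hgE hgp hgW ⊢
    refine mem_marked_succ hx hvW hgp ?_ (insert v e.toFinset ∪ g.toFinset) ?_ ?_ ?_
    · have g1 := edgeCount_restr_compl G v
      have g2 := vertexDegree_of_mem hN
      rw [Sym2.card_toFinset, if_neg (G.not_isDiag_of_mem_edgeSet hE)] at g2
      rw [edgeCount_add_edge hgd hgE]
      omega
    · have := Finset.card_union_le (insert v e.toFinset) g.toFinset
      have := Finset.card_insert_le v e.toFinset
      have := card_sym2_le_two e
      have := card_sym2_le_two g
      omega
    · intro a ha b
      rw [restr_changes hN a (fun h => ha (Finset.mem_union_left _ h)) b]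
      exact edge_changes g a (fun h => ha (Finset.mem_union_right _ h)) b
    · rintro a ha t (hat | hat)
      · rcases Finset.mem_insert.1 ha with rfl | ha
        · exact hat.2.1 rfl
        · exact h5 a ha t hat.1
      · rw [fromEdgeSet_adj, Set.mem_singleton_iff] at hat
        exact hgW a ha (by rw [← hat.1]; simp)
  · intro y hy
    rw [Finset.card_product, Finset.card_product, (mem_markedGraphs.1 hy).2.2.2.1, card_edgesOf,
      (mem_markedGraphs.1 hy).2.1]
  · rintro ⟨G, W⟩ hx ⟨⟨v, e⟩, g⟩ hp
    obtain ⟨hp, hg⟩ := Finset.mem_sigma.1 hp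
    obtain ⟨hE, hN⟩ := (Finset.mem_filter.1 hp).2
    obtain ⟨⟨hgd, hgE, hgp⟩, hgW⟩ := (Finset.mem_filter.1 hg).2
    have hvW := not_mem_marked (hS hx) hN
    simp only at hE hN hvW hgE hgp hgW
    have hve : v ∉ e := fun h => G.loopless.irrefl v ((hN v).2 h)
    refine ⟨(v, e, g), ?_, ?_⟩
    · refine Finset.mem_product.2 ⟨Finset.mem_insert_self _ _, Finset.mem_product.2
        ⟨mem_edgesOf.2 ?_, mem_edgesOf.2 ?_⟩⟩
      · induction e with | _ a b =>
        refine .inl ⟨hE, ?_, ?_⟩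
        · rintro rfl; exact hve (by simp)
        · rintro rfl; exact hve (by simp)
      · have : fromEdgeSet {g} ≤ restr G {v}ᶜ ⊔ fromEdgeSet {g} := le_sup_right
        exact edgeSet_mono this (by simpa using hgd)
    · simp only [add_edge_del hgE, attach_restr hN, Finset.erase_insert hvW]

/-- Lowering the number of edges by one while isolating and marking one more vertex loses only a
constant factor. -/
lemma markedGraphs_isolate (D : ℕ) (hD : 80 ≤ D) (hih : i < h) (hn : 80 * h + 80 ≤ n)
    (hDM : n ≤ D * (M + 1)) (hM : 5 * (M + 1) ≤ 6 * n)
    (hadd : ∀ G : SimpleGraph (Fin n), IsPlanar G → edgeCount G ≤ M →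
      (h + 1) * n ≤ (addableSet G).ncard) :
    (markedGraphs H n i (M + 1) s).card ≤
      8 * h * D ^ 2 * (markedGraphs H n (i + 1) M (s + 5)).card := by
  classical
  set S := markedGraphs H n i (M + 1) s with hS
  set T := markedGraphs H n (i + 1) M (s + 5) with hT
  obtain ⟨d, hd⟩ : ∃ d, d = n / 40 := ⟨_, rfl⟩
  have hd0 : 0 < d := by omega
  have hn0 : 0 < n := by omega
  have hdn : n ≤ D * d := by
    have : 80 * d ≤ D * d := Nat.mul_le_mul_right _ hD
    omega
  have hi : i + 1 ≤ h := hih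
  have hcov : S ⊆ S.filter (fun x => d ≤ (isoV x).card) ∪ S.filter (fun x => d ≤ (leafV x).card) ∪
      S.filter (fun x => d ≤ (openV x).card) ∪ S.filter (fun x => d ≤ (triV x).card) := by
    intro x hx
    obtain ⟨h1, h2, h3, h4, h5⟩ := mem_markedGraphs.1 hx
    have := exists_many_low x d (by omega)
    simp only [Finset.mem_union, Finset.mem_filter]
    tauto
  have hadd' : ∀ G : SimpleGraph (Fin n), IsPlanar G → edgeCount G ≤ M →
      (i + 1 + 1) * n ≤ (addableSet G).ncard := fun G h1 h2 =>
    (Nat.mul_le_mul_right n (by omega)).trans (hadd G h1 h2)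
  have e1 := isolate_iso (H := H) (S.filter (fun x => d ≤ (isoV x).card))
    (Finset.filter_subset _ _) d (fun x hx => (Finset.mem_filter.1 hx).2)
  have e2 := isolate_leaf (H := H) (S.filter (fun x => d ≤ (leafV x).card))
    (Finset.filter_subset _ _) d (fun x hx => (Finset.mem_filter.1 hx).2)
  have e3 := isolate_open (H := H) (S.filter (fun x => d ≤ (openV x).card))
    (Finset.filter_subset _ _) d (fun x hx => (Finset.mem_filter.1 hx).2)
  have e4 := isolate_tri (H := H) (S.filter (fun x => d ≤ (triV x).card))
    (Finset.filter_subset _ _) d (fun x hx => (Finset.mem_filter.1 hx).2) hadd'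
  rw [← hT] at e1 e2 e3 e4
  have hM2 : M ≤ 2 * n := by omega
  have f1 : (S.filter (fun x => d ≤ (isoV x).card)).card ≤ T.card * (h * (D * D)) := by
    refine Nat.le_of_mul_le_mul_right (e1.trans ?_) (Nat.mul_pos hd0 (Nat.succ_pos M))
    calc T.card * ((i + 1) * (n * n))
        ≤ T.card * (h * ((D * d) * (D * (M + 1)))) := by gcongr
      _ = T.card * (h * (D * D)) * (d * (M + 1)) := by ring
  have f2 : (S.filter (fun x => d ≤ (leafV x).card)).card ≤ T.card * (h * D) := by
    refine Nat.le_of_mul_le_mul_right (e2.trans ?_) hd0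
    calc T.card * ((i + 1) * n) ≤ T.card * (h * (D * d)) := by gcongr
      _ = T.card * (h * D) * d := by ring
  have f3 : (S.filter (fun x => d ≤ (openV x).card)).card ≤ T.card * (h * (2 * D)) := by
    refine Nat.le_of_mul_le_mul_right (e3.trans ?_) hd0
    calc T.card * ((i + 1) * M) ≤ T.card * (h * (2 * (D * d))) := by gcongr; omega
      _ = T.card * (h * (2 * D)) * d := by ring
  have f4 : (S.filter (fun x => d ≤ (triV x).card)).card ≤ T.card * (h * (4 * D)) := by
    refine Nat.le_of_mul_le_mul_right (e4.trans ?_) (Nat.mul_pos hd0 hn0)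
    calc T.card * ((i + 1) * (M * M)) ≤ T.card * (h * ((2 * (D * d)) * (2 * n))) := by
          gcongr; omega
      _ = T.card * (h * (4 * D)) * (d * n) := by ring
  have g := Finset.card_le_card hcov
  have g1 := Finset.card_union_le (S.filter (fun x => d ≤ (isoV x).card) ∪
    S.filter (fun x => d ≤ (leafV x).card) ∪ S.filter (fun x => d ≤ (openV x).card))
    (S.filter (fun x => d ≤ (triV x).card))
  have g2 := Finset.card_union_le (S.filter (fun x => d ≤ (isoV x).card) ∪
    S.filter (fun x => d ≤ (leafV x).card)) (S.filter (fun x => d ≤ (openV x).card))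
  have g3 := Finset.card_union_le (S.filter (fun x => d ≤ (isoV x).card))
    (S.filter (fun x => d ≤ (leafV x).card))
  have hDD : 7 * D ≤ 7 * (D * D) := by nlinarith
  calc S.card ≤ T.card * (h * (D * D)) + T.card * (h * D) + T.card * (h * (2 * D)) +
        T.card * (h * (4 * D)) := by omega
    _ = T.card * (h * (D * D + 7 * D)) := by ring
    _ ≤ T.card * (h * (D * D + 7 * (D * D))) := by gcongr
    _ = 8 * h * D ^ 2 * T.card := by ring

end Isolate

/-! ### One round of the argument and its iteration -/

/-- Adding an edge, isolating `h` vertices and planting a copy of `H` on them leads back to graphs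
with `m` edges, which may have `6 * h + 2` further copies of `H`. -/
lemma markedGraphs_round {h : ℕ} (H : SimpleGraph (Fin h)) (hH : H.IsTree) (n m s D : ℕ)
    (hD : 80 ≤ D) (hh : 1 ≤ h) (hhm : h ≤ m) (hn : 80 * h + 80 ≤ n)
    (hDm : n ≤ D * (m + 1 - h)) (hM : 5 * (m + 1) ≤ 6 * n)
    (hadd : ∀ G : SimpleGraph (Fin n), IsPlanar G → edgeCount G ≤ m →
      (h + 1) * n ≤ (addableSet G).ncard) :
    (markedGraphs H n 0 m s).card * addMin n m ≤
      (markedGraphs H n 0 m (s + (6 * h + 2))).card *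
        ((s + (6 * h + 2)) * (2 * (8 * h * D ^ 2) ^ h * n)) := by
  have chain : ∀ i, i ≤ h → (markedGraphs H n 0 (m + 1) (s + 2)).card ≤
      (8 * h * D ^ 2) ^ i * (markedGraphs H n i (m + 1 - i) (s + 2 + 5 * i)).card := by
    intro i
    induction i with
    | zero => intro _; simp
    | succ i ih =>
      intro hi
      refine (ih (by omega)).trans ?_
      have e : m + 1 - i = (m - i) + 1 := by omega
      have := markedGraphs_isolate (n := n) (H := H) (i := i) (M := m - i) (s := s + 2 + 5 * i) D hD
        (by omega) hn (hDm.trans (Nat.mul_le_mul_left _ (by omega))) (by omega)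
        (fun G g1 g2 => hadd G g1 (by omega))
      rw [e, pow_succ (8 * h * D ^ 2) i, mul_assoc ((8 * h * D ^ 2) ^ i)]
      refine Nat.mul_le_mul_left _ (this.trans (le_of_eq ?_))
      have e2 : m + 1 - (i + 1) = m - i := by omega
      rw [e2]
      rfl
  have h1 := markedGraphs_add H n m s
  have h2 := chain h le_rfl
  have h3 := markedGraphs_plant H hH n (m + 1 - h) (s + 2 + 5 * h)
  have e1 : m + 1 - h + (h - 1) = m := by omega
  have e2 : s + 2 + 5 * h + h = s + (6 * h + 2) := by omega
  rw [e1, e2] at h3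
  have hm : m + 1 ≤ 2 * n := by omega
  calc (markedGraphs H n 0 m s).card * addMin n m
      ≤ (markedGraphs H n 0 (m + 1) (s + 2)).card * (m + 1) := h1
    _ ≤ ((8 * h * D ^ 2) ^ h * ((markedGraphs H n 0 m (s + (6 * h + 2))).card *
          (s + (6 * h + 2)))) * (2 * n) :=
        Nat.mul_le_mul (h2.trans (Nat.mul_le_mul_left _ h3)) hm
    _ = _ := by ring

/-- Each of the first `T` rounds starting from the bound `T - 1` multiplies the count by at least
three, since the bound on the copies stays below `T * (C + 1)`. -/
lemma iterate_third (f : ℕ → ℕ) (A q C T : ℕ) (hA : 0 < A)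
    (hT : 3 * (T * (C + 1) * q) ≤ A) (hf : ∀ s, f s * A ≤ f (s + C) * ((s + C) * q)) :
    3 ^ T * f (T - 1) ≤ f (T - 1 + T * C) := by
  have key : ∀ j, j ≤ T → 3 ^ j * f (T - 1) ≤ f (T - 1 + j * C) := by
    intro j
    induction j with
    | zero => intro _; simp
    | succ j ih =>
      intro hj
      have h1 := ih (by omega)
      have h2 := hf (T - 1 + j * C)
      have e : T - 1 + j * C + C = T - 1 + (j + 1) * C := by ring
      rw [e] at h2
      have h3 : T - 1 + (j + 1) * C ≤ T * (C + 1) := by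
        have : (j + 1) * C ≤ T * C := Nat.mul_le_mul_right _ hj
        rw [mul_add]
        omega
      have h4 : 3 * f (T - 1 + j * C) ≤ f (T - 1 + (j + 1) * C) := by
        refine Nat.le_of_mul_le_mul_right ?_ hA
        calc 3 * f (T - 1 + j * C) * A = 3 * (f (T - 1 + j * C) * A) := by ring
          _ ≤ 3 * (f (T - 1 + (j + 1) * C) * ((T * (C + 1)) * q)) := by
              refine Nat.mul_le_mul_left _ (h2.trans ?_)
              gcongr
          _ = f (T - 1 + (j + 1) * C) * (3 * (T * (C + 1) * q)) := by ring
          _ ≤ f (T - 1 + (j + 1) * C) * A := Nat.mul_le_mul_left _ hT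
      calc 3 ^ (j + 1) * f (T - 1) = 3 * (3 ^ j * f (T - 1)) := by ring
        _ ≤ 3 * f (T - 1 + j * C) := Nat.mul_le_mul_left _ h1
        _ ≤ _ := h4
  exact key T le_rfl

theorem tree_components_lower_bound (h : ℕ) (H : SimpleGraph (Fin h)) (hH : H.IsTree)
    (c : ℝ) (hc : 0 < c) :
    ∃ lam : ℝ, 0 < lam ∧
      ∀ m : ℕ → ℕ,
        (∀ᶠ n : ℕ in atTop, c * (n : ℝ) ≤ (m n : ℝ)) →
        (∀ ε : ℝ, 0 < ε → ∀ᶠ n : ℕ in atTop, (m n : ℝ) ≤ (1 + ε) * n) →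
        ∀ᶠ n : ℕ in atTop,
          planarProb n (m n)
              (fun G => numOrderComponents H G < ⌈lam * (addMin n (m n) : ℝ) / n⌉₊) <
            Real.exp (-(⌈lam * (addMin n (m n) : ℝ) / n⌉₊ : ℝ)) := by
  have hh : 1 ≤ h := by
    obtain ⟨z⟩ := hH.connected.nonempty
    exact Nat.one_le_iff_ne_zero.2 (fun e => by subst e; exact z.elim0)
  obtain ⟨D, hD80, hDc⟩ : ∃ D : ℕ, 80 ≤ D ∧ 2 / c ≤ D :=
    ⟨max 80 ⌈2 / c⌉₊, le_max_left _ _, (Nat.le_ceil _).trans (by exact_mod_cast le_max_right _ _)⟩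
  obtain ⟨K, hK⟩ : ∃ K, K = 2 * (8 * h * D ^ 2) ^ h := ⟨_, rfl⟩
  have hK0 : 0 < K := by
    rw [hK]
    have : 0 < 8 * h * D ^ 2 := by positivity
    positivity
  obtain ⟨B, hB⟩ : ∃ B, B = 6 * (6 * h + 2 + 1) * K := ⟨_, rfl⟩
  have hB0 : 0 < B := by rw [hB]; positivity
  obtain ⟨ε, hε, N, hN⟩ := many_addable (B + h + 1)
  refine ⟨1 / B, by positivity, fun m hm1 hm2 => ?_⟩
  filter_upwards [hm1, hm2 (min ε (1 / 10)) (lt_min hε (by norm_num)), eventually_ge_atTop N,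
    eventually_ge_atTop (80 * h + 80), eventually_ge_atTop ⌈2 * h / c⌉₊] with n h1 h2 h3 h4 h5
  have hn0 : 0 < n := by omega
  have hnR : (0 : ℝ) < n := by exact_mod_cast hn0
  have hmε : (m n : ℝ) ≤ (1 + ε) * n :=
    h2.trans (by gcongr; exact min_le_left _ _)
  have hm10 : (m n : ℝ) ≤ (1 + 1 / 10) * n :=
    h2.trans (by gcongr; exact min_le_right _ _)
  have h5' : 2 * (h : ℝ) ≤ c * n := by
    have := Nat.ceil_le.1 h5
    rw [div_le_iff₀ hc] at this
    linarith
  have hhm : h ≤ m n := by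
    have : (h : ℝ) ≤ m n := by
      have : (0 : ℝ) ≤ h := by positivity
      linarith
    exact_mod_cast this
  have hDm : n ≤ D * (m n + 1 - h) := by
    have e : ((m n + 1 - h : ℕ) : ℝ) = m n + 1 - h := by
      rw [Nat.cast_sub (by omega)]; push_cast; ring
    have : (n : ℝ) ≤ D * ((m n + 1 - h : ℕ) : ℝ) := by
      rw [e]
      have g1 : c * n / 2 ≤ (m n : ℝ) + 1 - h := by linarith
      calc (n : ℝ) = 2 / c * (c * n / 2) := by field_simp
        _ ≤ D * ((m n : ℝ) + 1 - h) := by gcongr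
    exact_mod_cast this
  have hM : 5 * (m n + 1) ≤ 6 * n := by
    have h10 : (10 : ℝ) ≤ n := by exact_mod_cast (by omega : 10 ≤ n)
    have : (5 : ℝ) * (m n + 1) ≤ 6 * n := by linarith
    exact_mod_cast this
  have hadd : ∀ G : SimpleGraph (Fin n), IsPlanar G → edgeCount G ≤ m n →
      (B + h + 1) * n ≤ (addableSet G).ncard := by
    intro G g1 g2
    refine hN n h3 G g1 (le_trans ?_ hmε)
    exact_mod_cast g2
  by_cases hne : (planarSet n (m n)).Nonempty
  swap
  · rw [Set.not_nonempty_iff_eq_empty] at hne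
    simp only [planarProb, hne, Set.ncard_empty, Nat.cast_zero, div_zero]
    exact Real.exp_pos _
  have haddmin : B * n ≤ addMin n (m n) := by
    obtain ⟨G, ⟨g1, g2⟩, g3⟩ := Nat.sInf_mem (hne.image fun G => (addableSet G).ncard)
    rw [addMin, ← g3]
    refine le_trans (Nat.mul_le_mul_right n (by omega)) (hadd G g1 g2.le)
  have hstep : ∀ s, (markedGraphs H n 0 (m n) s).card * addMin n (m n) ≤
      (markedGraphs H n 0 (m n) (s + (6 * h + 2))).card * ((s + (6 * h + 2)) * (K * n)) := by
    intro s
    rw [hK]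
    exact markedGraphs_round H hH n (m n) s D hD80 hh hhm h4 hDm hM fun G g1 g2 =>
      (Nat.mul_le_mul_right n (by omega)).trans (hadd G g1 g2)
  set A := addMin n (m n) with hA
  have hA0 : 0 < A := lt_of_lt_of_le (Nat.mul_pos hB0 hn0) haddmin
  set T := ⌈1 / (B : ℝ) * (A : ℝ) / n⌉₊ with hT
  have hT0 : 0 < T := Nat.ceil_pos.2 (by positivity)
  -- one round gains a factor of three as long as the bound on copies is at most `T * (6 * h + 3)`
  have hTA : 3 * (T * (6 * h + 2 + 1) * (K * n)) ≤ A := by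
    have t1 : (T : ℝ) ≤ 1 / (B : ℝ) * A / n + 1 := (Nat.ceil_lt_add_one (by positivity)).le
    have t2 : (T : ℝ) * (B * n) ≤ A + B * n := by
      have hBR : (0 : ℝ) < B := by exact_mod_cast hB0
      calc (T : ℝ) * (B * n) ≤ (1 / (B : ℝ) * A / n + 1) * (B * n) := by gcongr
        _ = A + B * n := by field_simp
    have t3 : T * (B * n) ≤ A + B * n := by exact_mod_cast t2
    have t4 : T * (B * n) = 2 * (3 * (T * (6 * h + 2 + 1) * (K * n))) := by rw [hB]; ring
    omega
  have hiter := iterate_third (fun s => (markedGraphs H n 0 (m n) s).card) A (K * n) (6 * h + 2) T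
    hA0 hTA hstep
  have hcard : {G ∈ planarSet n (m n) | numOrderComponents H G < T}.ncard ≤
      (markedGraphs H n 0 (m n) (T - 1)).card := by
    rw [← Set.ncard_coe_finset]
    refine Set.ncard_le_ncard_of_injOn (fun G => (G, ∅)) ?_ ?_ (Set.toFinite _)
    · rintro G ⟨⟨g1, g2⟩, g3⟩
      exact Finset.mem_coe.2 (mem_markedGraphs.2 ⟨g1, g2, by simp only; omega, by simp, by simp⟩)
    · intro G _ G' _ e
      exact (Prod.mk.inj e).1
  have hcard2 : ∀ s, (markedGraphs H n 0 (m n) s).card ≤ (planarSet n (m n)).ncard := by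
    intro s
    rw [← Set.ncard_coe_finset]
    refine Set.ncard_le_ncard_of_injOn Prod.fst ?_ ?_ (Set.toFinite _)
    · intro x hx
      obtain ⟨g1, g2, -⟩ := mem_markedGraphs.1 (Finset.mem_coe.1 hx)
      exact ⟨g1, g2⟩
    · intro x hx y hy e
      have gx := (mem_markedGraphs.1 (Finset.mem_coe.1 hx)).2.2.2.1
      have gy := (mem_markedGraphs.1 (Finset.mem_coe.1 hy)).2.2.2.1
      refine Prod.ext e ?_
      rw [Finset.card_eq_zero.1 gx, Finset.card_eq_zero.1 gy]
  have hP0 : 0 < (planarSet n (m n)).ncard := (Set.ncard_pos (Set.toFinite _)).2 hne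
  have hfin : 3 ^ T * {G ∈ planarSet n (m n) | numOrderComponents H G < T}.ncard ≤
      (planarSet n (m n)).ncard :=
    (Nat.mul_le_mul_left _ hcard).trans (hiter.trans (hcard2 _))
  have hPR : (0 : ℝ) < (planarSet n (m n)).ncard := by exact_mod_cast hP0
  have hfinR : (3 : ℝ) ^ T * ({G ∈ planarSet n (m n) | numOrderComponents H G < T}.ncard : ℝ) ≤
      (planarSet n (m n)).ncard := by exact_mod_cast hfin
  have hprob : planarProb n (m n) (fun G => numOrderComponents H G < T) ≤ ((3 : ℝ) ^ T)⁻¹ := by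
    rw [planarProb, div_le_iff₀ hPR, inv_mul_eq_div, le_div_iff₀ (by positivity), mul_comm]
    exact hfinR
  refine hprob.trans_lt ?_
  rw [Real.exp_neg]
  refine inv_strictAnti₀ (Real.exp_pos _) ?_
  rw [← Real.exp_one_pow]
  exact pow_lt_pow_left₀ (Real.exp_one_lt_d9.trans (by norm_num)) (Real.exp_pos _).le hT0.ne'
end
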